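/- As the real variable x tends to 0, (1/4)·∑_{n=0}^∞ 2^{−2(n+x)} · [ (1/2)_{n+x} / (1)_{n+x} ]³ · (6(n+x)+1) = 1/π − π x² + 16 G x³ + O(x⁴), where G is Catalan's constant; in particular the coefficients of x⁰, x¹, x², x³ in the expansion are 1/π, 0, −π, 16G respectively. -/

import Mathlib

/-- The Pochhammer symbol for real index: `(a)_t = Γ(a+t)/Γ(a)`. -/
noncomputable def pochG (a t : ℝ) : ℝ := Real.Gamma (a + t) / Real.Gamma a

/-- Catalan's constant `G = ∑_{n≥0} (-1)^n/(2n+1)²`. -/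
noncomputable def catalan' : ℝ := ∑' n : ℕ, (-1 : ℝ) ^ n / (2 * (n : ℝ) + 1) ^ 2

/-!
The summand is the boundary case `k = 0` of a Wilf–Zeilberger pair,
`G(t, k + 1) - G(t, k) = F(t + 1, k) - F(t, k)`. Telescoping, `L(t) = ∑ₙ G(n + t, 0) - ∑ₖ F(t, k)`
is the limit of `∑ₙ G(n + t, k)` as `k → ∞`, and it is `1`-periodic in `t`. A periodic function that
is log-convex up to a factor tending to `1` is constant. This gives `L(t) = L(0)`, and, since
`F(0, k) = 0`, it also shows that `∑ₙ G(n, k)` does not depend on the real parameter `k`. At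
`k = 1/2` that series telescopes to `4/π`.

Hence the expanded function is `1/π + (1/4) ∑ₖ F(t, k)`, and `∑ₖ F(t, k) = -t² Φ(t)` with `Φ`
holomorphic near `0`, so it remains to find `Φ(0) = 4π` and `Φ'(0) = -64G`. With
`aₖ = (1/2)ₖ / k!`, the series for `Φ(0)` is that of `arcsin` at `1/2`. The one for `Φ'(0)` contains
`∑ aₖ hₖ 2⁻²ᵏ⁻¹ / (2k + 1)` for a harmonic sum `hₖ`. The generating function `∑ aₖ hₖ sin²ᵏ t` is
`-4 (log cos t + log cos (t/2)) / cos t`, so that series is a combination of log-sine integrals,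
which the duplication and triplication formulas reduce to Catalan's constant and to a dilogarithmic
series that cancels in `Φ'(0)`.
-/

open Asymptotics Filter Real Set Topology

/-! ### The Wilf–Zeilberger pair -/

/-- The hypergeometric kernel of the Wilf–Zeilberger pair `(wzG, wzF)`. -/
noncomputable def wzKernel (t k : ℝ) : ℝ :=
  2 ^ (-2 * (t + k)) * Gamma (t + k + 1 / 2) ^ 3 /
    (√π * Gamma (t + k + 1) * Gamma (t + 1) ^ 2 * Gamma (k + 1 / 2) ^ 2)

/-- The member `G(t, k)` of the Wilf–Zeilberger pair, to be summed over `t`. -/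
noncomputable def wzG (t k : ℝ) : ℝ := wzKernel t k * (6 * t + 2 * k + 1)

/-- The member `F(t, k)` of the Wilf–Zeilberger pair, to be summed over `k`. -/
noncomputable def wzF (t k : ℝ) : ℝ :=
  -(wzKernel t k * (t ^ 2 * (2 * t + 6 * k + 3) / (k + 1 / 2) ^ 2))

lemma wzKernel_pos {t k : ℝ} (ht : -1 / 2 < t) (hk : 0 ≤ k) : 0 < wzKernel t k := by
  have h₁ := Gamma_pos_of_pos (show 0 < t + k + 1 / 2 by linarith)
  have h₂ := Gamma_pos_of_pos (show 0 < t + k + 1 by linarith)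
  have h₃ := Gamma_pos_of_pos (show 0 < t + 1 by linarith)
  unfold wzKernel
  positivity

lemma wzKernel_add_one_left {t k : ℝ} (ht : -1 / 2 < t) (hk : 0 ≤ k) :
    wzKernel (t + 1) k
      = wzKernel t k * ((t + k + 1 / 2) ^ 3 / (4 * (t + k + 1) * (t + 1) ^ 2)) := by
  have h₁ : t + k + 1 / 2 ≠ 0 := by linarith
  have h₂ : t + k + 1 ≠ 0 := by linarith
  have h₃ : t + 1 ≠ 0 := by linarith
  have h₄ : (2 : ℝ) ^ (-2 * (t + 1 + k)) = 2 ^ (-2 * (t + k)) / 4 := by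
    rw [show -2 * (t + 1 + k) = -2 * (t + k) - 2 by ring, rpow_sub two_pos]
    norm_num
  unfold wzKernel
  rw [show t + 1 + k + 1 / 2 = t + k + 1 / 2 + 1 by ring, Gamma_add_one h₁,
    show t + 1 + k + 1 = t + k + 1 + 1 by ring, Gamma_add_one h₂, Gamma_add_one h₃, h₄]
  field_simp

lemma wzKernel_add_one_right {t k : ℝ} (ht : -1 / 2 < t) (hk : 0 ≤ k) :
    wzKernel t (k + 1)
      = wzKernel t k * ((t + k + 1 / 2) ^ 3 / (4 * (t + k + 1) * (k + 1 / 2) ^ 2)) := by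
  have h₁ : t + k + 1 / 2 ≠ 0 := by linarith
  have h₂ : t + k + 1 ≠ 0 := by linarith
  have h₃ : k + 1 / 2 ≠ 0 := by linarith
  have h₄ : (2 : ℝ) ^ (-2 * (t + (k + 1))) = 2 ^ (-2 * (t + k)) / 4 := by
    rw [show -2 * (t + (k + 1)) = -2 * (t + k) - 2 by ring, rpow_sub two_pos]
    norm_num
  unfold wzKernel
  rw [show t + (k + 1) + 1 / 2 = t + k + 1 / 2 + 1 by ring, Gamma_add_one h₁,
    show t + (k + 1) + 1 = t + k + 1 + 1 by ring, Gamma_add_one h₂,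
    show k + 1 + 1 / 2 = k + 1 / 2 + 1 by ring, Gamma_add_one h₃, h₄]
  field_simp

lemma wzG_sub_eq_wzF_sub {t k : ℝ} (ht : -1 / 2 < t) (hk : 0 ≤ k) :
    wzG t (k + 1) - wzG t k = wzF (t + 1) k - wzF t k := by
  have h₁ : t + k + 1 ≠ 0 := by linarith
  have h₂ : k * 2 + 1 ≠ 0 := by linarith
  have h₃ : t + 1 ≠ 0 := by linarith
  unfold wzG wzF
  rw [wzKernel_add_one_left ht hk, wzKernel_add_one_right ht hk]
  field_simp
  ring

lemma summable_mul_of_ratio_tendsto {u r v : ℕ → ℝ} {ℓ : ℝ} {m : ℕ} (hu : ∀ n, 0 < u n)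
    (hur : ∀ n, u (n + 1) = u n * r n) (hr : Tendsto r atTop (𝓝 ℓ)) (hℓ : ℓ < 1)
    (hv : v =O[atTop] fun n : ℕ => ((n : ℝ) + 1) ^ m) : Summable fun n => u n * v n := by
  suffices h : Summable fun n : ℕ => u n * ((n : ℝ) + 1) ^ m from
    summable_of_isBigO_nat h ((isBigO_refl u atTop).mul hv)
  have hratio : Tendsto (fun n : ℕ => (2 + 1 * (n : ℝ)) / (1 + 1 * n)) atTop (𝓝 (1 / 1)) :=
    tendsto_add_mul_div_add_mul_atTop_nhds 2 1 1 one_ne_zero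
  have hlim := hr.mul (hratio.pow m)
  rw [div_one, one_pow, mul_one] at hlim
  have hpos (n : ℕ) : 0 < u n * ((n : ℝ) + 1) ^ m := mul_pos (hu n) (by positivity)
  refine summable_of_ratio_test_tendsto_lt_one hℓ (.of_forall fun n => (hpos n).ne')
    (hlim.congr fun n => ?_)
  have := hu n
  rw [norm_of_nonneg (hpos _).le, norm_of_nonneg (hpos _).le, hur, eq_div_iff (hpos n).ne', div_pow]
  push_cast
  field_simp
  ring

lemma isBigO_mul_natCast_add (a b : ℝ) :
    (fun n : ℕ => a * n + b) =O[atTop] fun n : ℕ => (n : ℝ) + 1 := by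
  refine .of_bound (|a| + |b|) (.of_forall fun n => ?_)
  have hn : (0 : ℝ) ≤ n := n.cast_nonneg
  rw [norm_eq_abs, norm_of_nonneg (by positivity)]
  calc |a * n + b| ≤ |a * n| + |b| := abs_add_le _ _
    _ = |a| * n + |b| := by rw [abs_mul, abs_of_nonneg hn]
    _ ≤ (|a| + |b|) * (n + 1) := by nlinarith [abs_nonneg a, mul_nonneg (abs_nonneg b) hn]

lemma summable_wzKernel_mul_left {t k : ℝ} {v : ℕ → ℝ} {m : ℕ} (ht : -1 / 2 < t) (hk : 0 ≤ k)
    (hv : v =O[atTop] fun n : ℕ => ((n : ℝ) + 1) ^ m) :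
    Summable fun n : ℕ => wzKernel (n + t) k * v n := by
  have hnt (n : ℕ) : -1 / 2 < n + t := by linarith [n.cast_nonneg (α := ℝ)]
  refine summable_mul_of_ratio_tendsto (fun n => wzKernel_pos (hnt n) hk)
    (fun n => (congrArg (wzKernel · k) ?_).trans (wzKernel_add_one_left (hnt n) hk))
    (ℓ := 1 / 4 * (1 / 1) ^ 2) ?_ (by norm_num) hv
  · rw [Nat.cast_add_one, add_right_comm]
  · refine ((tendsto_add_mul_div_add_mul_atTop_nhds (t + k + 1 / 2) (4 * (t + k + 1)) 1
      four_ne_zero).mul ((tendsto_add_mul_div_add_mul_atTop_nhds (t + k + 1 / 2) (t + 1) 1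
      one_ne_zero).pow 2)).congr fun n => ?_
    rw [div_pow, div_mul_div_comm]
    ring_nf

lemma summable_wzKernel_mul_right {t : ℝ} {v : ℕ → ℝ} {m : ℕ} (ht : -1 / 2 < t)
    (hv : v =O[atTop] fun k : ℕ => ((k : ℝ) + 1) ^ m) :
    Summable fun k : ℕ => wzKernel t k * v k := by
  refine summable_mul_of_ratio_tendsto (fun k => wzKernel_pos ht k.cast_nonneg)
    (fun k => (congrArg (wzKernel t) k.cast_add_one).trans
      (wzKernel_add_one_right ht k.cast_nonneg))
    (ℓ := 1 / 4 * (1 / 1) ^ 2) ?_ (by norm_num) hv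
  refine ((tendsto_add_mul_div_add_mul_atTop_nhds (t + 1 / 2) (4 * (t + 1)) 1
    four_ne_zero).mul ((tendsto_add_mul_div_add_mul_atTop_nhds (t + 1 / 2) (1 / 2) 1
    one_ne_zero).pow 2)).congr fun k => ?_
  rw [div_pow, div_mul_div_comm]
  ring_nf

lemma summable_wzG_left {t k : ℝ} (ht : -1 / 2 < t) (hk : 0 ≤ k) :
    Summable fun n : ℕ => wzG (n + t) k := by
  refine summable_wzKernel_mul_left (m := 1) ht hk ?_
  simpa only [pow_one] using (isBigO_mul_natCast_add 6 (6 * t + 2 * k + 1)).congr_left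
    fun n => by ring

lemma summable_wzF_left {t k : ℝ} (ht : -1 / 2 < t) (hk : 0 ≤ k) :
    Summable fun n : ℕ => wzF (n + t) k := by
  refine (summable_wzKernel_mul_left (m := 3) ht hk ?_).neg
  have h := (((isBigO_mul_natCast_add 1 t).pow 2).mul
    (isBigO_mul_natCast_add 2 (2 * t + 6 * k + 3))).const_mul_left (1 / (k + 1 / 2) ^ 2)
  exact h.congr (fun n => by ring) fun n => by ring

lemma summable_wzG_right {t : ℝ} (ht : -1 / 2 < t) : Summable fun k : ℕ => wzG t k := by
  refine summable_wzKernel_mul_right (m := 1) ht ?_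
  simpa only [pow_one] using (isBigO_mul_natCast_add 2 (6 * t + 1)).congr_left fun n => by ring

lemma summable_wzF_right {t : ℝ} (ht : -1 / 2 < t) : Summable fun k : ℕ => wzF t k := by
  refine (summable_wzKernel_mul_right (m := 1) ht ?_).neg
  have hinv : (fun k : ℕ => t ^ 2 / ((k : ℝ) + 1 / 2) ^ 2) =O[atTop] fun _ => (1 : ℝ) := by
    refine .of_bound (4 * t ^ 2) (.of_forall fun k => ?_)
    rw [norm_of_nonneg (by positivity), norm_one, mul_one, div_le_iff₀ (by positivity)]
    nlinarith [mul_nonneg (sq_nonneg t) (k.cast_nonneg (α := ℝ)), sq_nonneg (t * k)]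
  exact (hinv.mul (isBigO_mul_natCast_add 6 (2 * t + 3))).congr (fun k => by ring)
    fun k => by ring

lemma tsum_wzG_add_one {t k : ℝ} (ht : -1 / 2 < t) (hk : 0 ≤ k) :
    ∑' n : ℕ, wzG (n + t) (k + 1) = ∑' n : ℕ, wzG (n + t) k - wzF t k := by
  have hsub (n : ℕ) : wzG (n + t) (k + 1) - wzG (n + t) k
      = wzF ((n + 1 : ℕ) + t) k - wzF (n + t) k := by
    rw [wzG_sub_eq_wzF_sub (by linarith [n.cast_nonneg (α := ℝ)]) hk, Nat.cast_add_one,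
      add_right_comm]
  have hsum := ((summable_wzG_left ht (k := k + 1) (by linarith)).hasSum.sub
    (summable_wzG_left ht hk).hasSum).tendsto_sum_nat
  simp only [hsub, Finset.sum_range_sub (fun n : ℕ => wzF (n + t) k), Nat.cast_zero, zero_add]
    at hsum
  have := tendsto_nhds_unique hsum
    ((summable_wzF_left ht hk).tendsto_atTop_zero.sub_const (wzF t k))
  linarith

/-- The limit as `k → ∞` of `∑ₙ G(n + t, k)`, obtained by telescoping the WZ relation. -/
noncomputable def wzLimit (t : ℝ) : ℝ := ∑' n : ℕ, wzG (n + t) 0 - ∑' k : ℕ, wzF t k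

lemma tendsto_tsum_wzG {t : ℝ} (ht : -1 / 2 < t) :
    Tendsto (fun k : ℕ => ∑' n : ℕ, wzG (n + t) k) atTop (𝓝 (wzLimit t)) := by
  refine ((summable_wzF_right ht).hasSum.tendsto_sum_nat.const_sub
    (∑' n : ℕ, wzG (n + t) 0)).congr fun K => ?_
  induction K with
  | zero => simp
  | succ K ih =>
    rw [Nat.cast_add_one, tsum_wzG_add_one ht K.cast_nonneg, ← ih, Finset.sum_range_succ]
    ring

lemma wzLimit_add_one {t : ℝ} (ht : -1 / 2 < t) : wzLimit (t + 1) = wzLimit t := by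
  have h := (tendsto_tsum_wzG (show -1 / 2 < t + 1 by linarith)).add
    (summable_wzG_right ht).tendsto_atTop_zero
  rw [add_zero] at h
  refine tendsto_nhds_unique h ((tendsto_tsum_wzG ht).congr fun k => ?_)
  rw [(summable_wzG_left ht k.cast_nonneg).tsum_eq_zero_add, Nat.cast_zero, zero_add, add_comm]
  simp only [Nat.cast_add_one, add_assoc, add_comm t 1]

/-! ### Near log-convexity -/

/-- `h` is positive on `[0, 1]` and, up to the factor `C`, lies below the geometric interpolation
of its end values. For `C = 1` this is implied by log-convexity; the factor `C` leaves room for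
reciprocals and affine functions. -/
def NearlyLogConvex (C : ℝ) (h : ℝ → ℝ) : Prop :=
  ∀ y ∈ Icc (0 : ℝ) 1, 0 < h y ∧ h y ≤ C * (h 0 ^ (1 - y) * h 1 ^ y)

namespace NearlyLogConvex

variable {C D : ℝ} {f g h : ℝ → ℝ}

lemma pos_zero (hh : NearlyLogConvex C h) : 0 < h 0 := (hh 0 (by simp)).1

lemma pos_one (hh : NearlyLogConvex C h) : 0 < h 1 := (hh 1 (by simp)).1

lemma interpolation_pos (hh : NearlyLogConvex C h) (y : ℝ) : 0 < h 0 ^ (1 - y) * h 1 ^ y :=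
  mul_pos (rpow_pos_of_pos hh.pos_zero _) (rpow_pos_of_pos hh.pos_one _)

lemma const_pos (hh : NearlyLogConvex C h) : 0 < C := by
  obtain ⟨hpos, hle⟩ := hh 0 (by simp)
  exact pos_of_mul_pos_left (hpos.trans_le hle) (hh.interpolation_pos 0).le

lemma mono (hh : NearlyLogConvex C h) (hCD : C ≤ D) : NearlyLogConvex D h := fun y hy =>
  ⟨(hh y hy).1, (hh y hy).2.trans (mul_le_mul_of_nonneg_right hCD (hh.interpolation_pos y).le)⟩

lemma mul (hf : NearlyLogConvex C f) (hg : NearlyLogConvex D g) :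
    NearlyLogConvex (C * D) fun y => f y * g y := fun y hy => by
  obtain ⟨hf₁, hf₂⟩ := hf y hy
  obtain ⟨hg₁, hg₂⟩ := hg y hy
  refine ⟨mul_pos hf₁ hg₁, (mul_le_mul hf₂ hg₂ hg₁.le (hf₁.le.trans hf₂)).trans_eq ?_⟩
  rw [mul_rpow hf.pos_zero.le hg.pos_zero.le, mul_rpow hf.pos_one.le hg.pos_one.le]
  ring

lemma pow (hh : NearlyLogConvex C h) (m : ℕ) : NearlyLogConvex (C ^ m) fun y => h y ^ m :=
  fun y hy => by
    obtain ⟨h₁, h₂⟩ := hh y hy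
    refine ⟨pow_pos h₁ m, (pow_le_pow_left₀ h₁.le h₂ m).trans_eq ?_⟩
    rw [mul_pow, mul_pow, rpow_pow_comm hh.pos_zero.le, rpow_pow_comm hh.pos_one.le]

lemma le_linear_interpolation (hh : NearlyLogConvex C h) {y : ℝ} (hy : y ∈ Icc (0 : ℝ) 1) :
    h y ≤ C * ((1 - y) * h 0 + y * h 1) :=
  (hh y hy).2.trans <| mul_le_mul_of_nonneg_left
    (geom_mean_le_arith_mean2_weighted (sub_nonneg.2 hy.2) hy.1 hh.pos_zero.le hh.pos_one.le
      (sub_add_cancel 1 y)) hh.const_pos.le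

end NearlyLogConvex

lemma nearlyLogConvex_const {c : ℝ} (hc : 0 < c) : NearlyLogConvex 1 fun _ => c := fun y _ =>
  ⟨hc, by rw [← rpow_add hc, sub_add_cancel, rpow_one, one_mul]⟩

lemma nearlyLogConvex_rpow {c : ℝ} (hc : 0 < c) (a b : ℝ) :
    NearlyLogConvex 1 fun y => c ^ (a + b * y) := fun y _ => by
  refine ⟨rpow_pos_of_pos hc _, le_of_eq ?_⟩
  rw [one_mul, ← rpow_mul hc.le, ← rpow_mul hc.le, ← rpow_add hc]
  ring_nf

lemma nearlyLogConvex_affine {a b : ℝ} (ha : 0 < a) (hb : 0 ≤ b) :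
    NearlyLogConvex (1 + b / a) fun y => a + b * y := fun y hy => by
  have hy₀ := hy.1
  refine ⟨by positivity, ?_⟩
  calc a + b * y ≤ a + b * 1 := by gcongr; exact hy.2
    _ = (1 + b / a) * (a ^ (1 - y) * a ^ y) := by
      rw [← rpow_add ha, sub_add_cancel, rpow_one]
      field_simp
    _ ≤ (1 + b / a) * ((a + b * 0) ^ (1 - y) * (a + b * 1) ^ y) := by
      rw [mul_zero, add_zero]
      gcongr
      linarith

lemma nearlyLogConvex_Gamma {a : ℝ} (ha : 0 < a) : NearlyLogConvex 1 fun y => Gamma (a + y) :=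
  fun y hy => by
    have h₀ := Gamma_pos_of_pos ha
    have h₁ := Gamma_pos_of_pos (add_pos ha one_pos)
    have hy₀ := Gamma_pos_of_pos (add_pos_of_pos_of_nonneg ha hy.1)
    have h := convexOn_log_Gamma.2 (mem_Ioi.2 ha) (mem_Ioi.2 (add_pos ha one_pos))
      (sub_nonneg.2 hy.2) hy.1 (sub_add_cancel 1 y)
    simp only [smul_eq_mul, Function.comp_apply,
      show (1 - y) * a + y * (a + 1) = a + y by ring] at h
    refine ⟨hy₀, ?_⟩
    beta_reduce
    rw [one_mul, add_zero, ← log_le_log_iff hy₀ (by positivity),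
      log_mul (rpow_pos_of_pos h₀ _).ne' (rpow_pos_of_pos h₁ _).ne', log_rpow h₀, log_rpow h₁]
    exact h

lemma Gamma_mul_rpow_le {a y : ℝ} (ha : 0 < a) (hy : y ∈ Icc (0 : ℝ) 1) :
    Gamma a * a ^ y ≤ (1 + 1 / a) * Gamma (a + y) := by
  obtain ⟨hy₀, hy₁⟩ := hy
  have hay : 0 < a + y := by positivity
  have hG := Gamma_pos_of_pos hay
  have hGamma : a * Gamma a ≤ Gamma (a + y) * (a + y) ^ (1 - y) := by
    have h := (nearlyLogConvex_Gamma hay (1 - y) ⟨sub_nonneg.2 hy₁, sub_le_self 1 hy₀⟩).2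
    beta_reduce at h
    rwa [one_mul, sub_sub_cancel, add_add_sub_cancel, add_zero, Gamma_add_one ha.ne',
      Gamma_add_one hay.ne', mul_comm (a + y), mul_rpow hG.le hay.le, ← mul_assoc, ← rpow_add hG,
      add_sub_cancel, rpow_one] at h
  have hbase : a ^ y * (a + y) ^ (1 - y) ≤ a + 1 :=
    calc a ^ y * (a + y) ^ (1 - y) ≤ (a + 1) ^ y * (a + 1) ^ (1 - y) := by
          have := sub_nonneg.2 hy₁
          gcongr
          linarith
      _ = a + 1 := by rw [← rpow_add (by positivity), add_sub_cancel, rpow_one]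
  refine le_of_mul_le_mul_left ?_ ha
  calc a * (Gamma a * a ^ y) = a * Gamma a * a ^ y := by ring
    _ ≤ Gamma (a + y) * (a + y) ^ (1 - y) * a ^ y := by gcongr
    _ = Gamma (a + y) * (a ^ y * (a + y) ^ (1 - y)) := by ring
    _ ≤ Gamma (a + y) * (a + 1) := by gcongr
    _ = a * ((1 + 1 / a) * Gamma (a + y)) := by field_simp

lemma nearlyLogConvex_Gamma_inv {a : ℝ} (ha : 0 < a) :
    NearlyLogConvex (1 + 1 / a) fun y => (Gamma (a + y))⁻¹ := fun y hy => by
  have hG := Gamma_pos_of_pos ha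
  have hGy := Gamma_pos_of_pos (add_pos_of_pos_of_nonneg ha hy.1)
  refine ⟨inv_pos.2 hGy, ?_⟩
  beta_reduce
  rw [add_zero, Gamma_add_one ha.ne', inv_rpow hG.le, inv_rpow (by positivity), ← mul_inv,
    mul_comm a, mul_rpow hG.le ha.le, ← mul_assoc, ← rpow_add hG, sub_add_cancel, rpow_one,
    ← div_eq_mul_inv, inv_eq_one_div, div_le_div_iff₀ hGy (by positivity), one_mul]
  exact Gamma_mul_rpow_le ha hy

lemma tsum_le_of_nearlyLogConvex {ι : Type*} {C : ℝ} {h : ι → ℝ → ℝ}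
    (hh : ∀ n, NearlyLogConvex C (h n)) (hs : ∀ y ∈ Icc (0 : ℝ) 1, Summable fun n => h n y)
    {y : ℝ} (hy : y ∈ Icc (0 : ℝ) 1) :
    ∑' n, h n y ≤ C * ((1 - y) * ∑' n, h n 0 + y * ∑' n, h n 1) := by
  have h₀ := hs 0 (left_mem_Icc.2 zero_le_one)
  have h₁ := hs 1 (right_mem_Icc.2 zero_le_one)
  rw [← tsum_mul_left, ← tsum_mul_left,
    ← (h₀.mul_left _).tsum_add (h₁.mul_left _), ← tsum_mul_left]
  exact (hs y hy).tsum_le_tsum (fun n => (hh n).le_linear_interpolation hy)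
    (((h₀.mul_left _).add (h₁.mul_left _)).mul_left C)

lemma eq_apply_zero_of_periodic {p C : ℝ → ℝ} (hC : Tendsto C atTop (𝓝 1))
    (hp : ∀ x, 0 ≤ x → p (x + 1) = p x)
    (hle : ∀ x, 0 < x → ∀ y ∈ Icc (0 : ℝ) 1, p (x + y) ≤ C x * p x) {x : ℝ} (hx : 0 ≤ x) :
    p x = p 0 := by
  have hshift {x : ℝ} (hx : 0 ≤ x) (n : ℕ) : p (x + n) = p x := by
    induction n with
    | zero => simp
    | succ n ih => rw [Nat.cast_add_one, ← add_assoc, hp _ (by positivity), ih]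
  have hmono {x y : ℝ} (hx : 0 ≤ x) (hy : y ∈ Icc (0 : ℝ) 1) : p (x + y) ≤ p x := by
    have hlim : Tendsto (fun n : ℕ => C (x + n) * p x) atTop (𝓝 (1 * p x)) :=
      (hC.comp (tendsto_atTop_add_const_left _ _ tendsto_natCast_atTop_atTop)).mul_const _
    rw [one_mul] at hlim
    refine ge_of_tendsto hlim ((eventually_ge_atTop 1).mono fun n hn => ?_)
    have h := hle (x + n) (by positivity) y hy
    rwa [hshift hx, add_right_comm, hshift (add_nonneg hx hy.1)] at h
  have hfract := Int.fract_nonneg x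
  have hfract' := (Int.fract_lt_one x).le
  have hx_fract : p x = p (Int.fract x) := by
    rw [← hshift hfract ⌊x⌋₊, natCast_floor_eq_intCast_floor hx, Int.fract_add_floor]
  rw [hx_fract]
  refine le_antisymm ?_ ?_
  · simpa only [zero_add] using hmono le_rfl ⟨hfract, hfract'⟩
  · have h := hmono hfract ⟨sub_nonneg.2 hfract', sub_le_self 1 hfract⟩
    rwa [add_sub_cancel, ← zero_add 1, hp 0 le_rfl] at h

/-! ### Evaluation of the limit -/

lemma nearlyLogConvex_wzG_left {t k : ℝ} (ht : 0 < t) (hk : 0 ≤ k) :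
    NearlyLogConvex ((1 + 1 / t) ^ 4) fun y => wzG (t + y) k := by
  have h := (((((nearlyLogConvex_rpow two_pos (-2 * (t + k)) (-2)).mul
    ((nearlyLogConvex_Gamma (show 0 < t + k + 1 / 2 by linarith)).pow 3)).mul
    (nearlyLogConvex_Gamma_inv (show 0 < t + k + 1 by linarith))).mul
    ((nearlyLogConvex_Gamma_inv (show 0 < t + 1 by linarith)).pow 2)).mul
    (nearlyLogConvex_const (show 0 < (√π * Gamma (k + 1 / 2) ^ 2)⁻¹ by positivity))).mul
    (nearlyLogConvex_affine (show 0 < 6 * t + 2 * k + 1 by linarith) (show (0 : ℝ) ≤ 6 by norm_num))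
  have hC : 1 * 1 ^ 3 * (1 + 1 / (t + k + 1)) * (1 + 1 / (t + 1)) ^ 2 * 1 *
      (1 + 6 / (6 * t + 2 * k + 1)) ≤ (1 + 1 / t) ^ 4 := by
    have h₁ : 1 / (t + k + 1) ≤ 1 / t := one_div_le_one_div_of_le ht (by linarith)
    have h₂ : 1 / (t + 1) ≤ 1 / t := one_div_le_one_div_of_le ht (by linarith)
    have h₃ : 6 / (6 * t + 2 * k + 1) ≤ 1 / t := by
      rw [div_le_div_iff₀ (by positivity) ht]
      linarith
    calc _ ≤ 1 * 1 ^ 3 * (1 + 1 / t) * (1 + 1 / t) ^ 2 * 1 * (1 + 1 / t) := by gcongr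
      _ = _ := by ring
  convert h.mono hC using 2 with y
  rw [wzG, wzKernel]
  ring_nf

lemma nearlyLogConvex_wzG_right {t k : ℝ} (ht : 0 ≤ t) (hk : 0 < k) :
    NearlyLogConvex ((1 + 1 / k) ^ 4) fun y => wzG t (k + y) := by
  have h := (((((nearlyLogConvex_rpow two_pos (-2 * (t + k)) (-2)).mul
    ((nearlyLogConvex_Gamma (show 0 < t + k + 1 / 2 by linarith)).pow 3)).mul
    (nearlyLogConvex_Gamma_inv (show 0 < t + k + 1 by linarith))).mul
    ((nearlyLogConvex_Gamma_inv (show 0 < k + 1 / 2 by linarith)).pow 2)).mul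
    (nearlyLogConvex_const (show 0 < (√π * Gamma (t + 1) ^ 2)⁻¹ by positivity))).mul
    (nearlyLogConvex_affine (show 0 < 6 * t + 2 * k + 1 by linarith) zero_le_two)
  have hC : 1 * 1 ^ 3 * (1 + 1 / (t + k + 1)) * (1 + 1 / (k + 1 / 2)) ^ 2 * 1 *
      (1 + 2 / (6 * t + 2 * k + 1)) ≤ (1 + 1 / k) ^ 4 := by
    have h₁ : 1 / (t + k + 1) ≤ 1 / k := one_div_le_one_div_of_le hk (by linarith)
    have h₂ : 1 / (k + 1 / 2) ≤ 1 / k := one_div_le_one_div_of_le hk (by linarith)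
    have h₃ : 2 / (6 * t + 2 * k + 1) ≤ 1 / k := by
      rw [div_le_div_iff₀ (by positivity) hk]
      linarith
    calc _ ≤ 1 * 1 ^ 3 * (1 + 1 / k) * (1 + 1 / k) ^ 2 * 1 * (1 + 1 / k) := by gcongr
      _ = _ := by ring
  convert h.mono hC using 2 with y
  rw [wzG, wzKernel]
  ring_nf

lemma tendsto_one_add_one_div_pow_atTop (m : ℕ) :
    Tendsto (fun x : ℝ => (1 + 1 / x) ^ m) atTop (𝓝 1) := by
  simpa using ((tendsto_id.const_div_atTop (1 : ℝ)).const_add 1).pow m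

lemma wzLimit_eq_wzLimit_zero {t : ℝ} (ht : 0 ≤ t) : wzLimit t = wzLimit 0 := by
  refine eq_apply_zero_of_periodic (tendsto_one_add_one_div_pow_atTop 4)
    (fun t ht => wzLimit_add_one (by linarith)) (fun t ht y hy => ?_) ht
  have hty : -1 / 2 < t + y := by linarith [hy.1]
  have hle (k : ℕ) : ∑' n : ℕ, wzG (n + (t + y)) k ≤ (1 + 1 / t) ^ 4 *
      ((1 - y) * ∑' n : ℕ, wzG (n + t) k + y * ∑' n : ℕ, wzG (n + (t + 1)) k) := by
    have hnear (n : ℕ) : NearlyLogConvex ((1 + 1 / t) ^ 4) fun y => wzG (n + (t + y)) k := by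
      have h := nearlyLogConvex_wzG_left (show 0 < n + t by positivity) k.cast_nonneg
      simp only [add_assoc] at h
      exact h.mono (by gcongr; linarith [n.cast_nonneg (α := ℝ)])
    simpa only [add_zero] using tsum_le_of_nearlyLogConvex hnear
      (fun y hy => summable_wzG_left (by linarith [hy.1]) k.cast_nonneg) hy
  have hlim := le_of_tendsto_of_tendsto' (tendsto_tsum_wzG hty)
    ((((tendsto_tsum_wzG (show -1 / 2 < t by linarith)).const_mul (1 - y)).add
      ((tendsto_tsum_wzG (show -1 / 2 < t + 1 by linarith)).const_mul y)).const_mul _) hle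
  rwa [wzLimit_add_one (by linarith), ← add_mul, sub_add_cancel, one_mul] at hlim

lemma wzF_zero_left (k : ℝ) : wzF 0 k = 0 := by simp [wzF]

lemma tsum_wzG_natCast_eq {k : ℝ} (hk : 0 ≤ k) : ∑' n : ℕ, wzG n k = ∑' n : ℕ, wzG n 0 := by
  have hperiod {k : ℝ} (hk : 0 ≤ k) : ∑' n : ℕ, wzG n (k + 1) = ∑' n : ℕ, wzG n k := by
    simpa [wzF_zero_left] using tsum_wzG_add_one (t := 0) (by norm_num) hk
  refine eq_apply_zero_of_periodic (tendsto_one_add_one_div_pow_atTop 4)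
    (p := fun k => ∑' n : ℕ, wzG n k) (fun k hk => hperiod hk) (fun k hk y hy => ?_) hk
  have h := tsum_le_of_nearlyLogConvex (h := fun (n : ℕ) y => wzG n (k + y))
    (fun n => nearlyLogConvex_wzG_right n.cast_nonneg hk)
    (fun y hy => by
      simpa using summable_wzG_left (t := 0) (by norm_num) (add_nonneg hk.le hy.1)) hy
  rwa [add_zero, hperiod hk.le, ← add_mul, sub_add_cancel, one_mul] at h

lemma wzG_one_half {t : ℝ} (ht : 0 ≤ t) :
    wzG t (1 / 2) = wzKernel t (1 / 2) * (8 * t + 4) -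
      wzKernel (t + 1) (1 / 2) * (8 * (t + 1) + 4) := by
  rw [wzG, wzKernel_add_one_left (by linarith) (by norm_num)]
  field_simp
  ring

lemma wzKernel_zero_one_half : wzKernel 0 (1 / 2) = 1 / π := by
  have hpow : (2 : ℝ) ^ (-2 * (0 + 1 / 2) : ℝ) = 1 / 2 := by norm_num [rpow_neg_one]
  have hGamma : Gamma (0 + 1 / 2 + 1) = √π / 2 := by
    rw [zero_add, Gamma_add_one (by norm_num), Gamma_one_half_eq]
    ring
  rw [wzKernel, hpow, hGamma, zero_add, add_halves, zero_add, Gamma_one]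
  field_simp
  rw [sq_sqrt pi_nonneg]

lemma tsum_wzG_one_half : ∑' n : ℕ, wzG n (1 / 2) = 4 / π := by
  have hlim : Tendsto (fun n : ℕ => wzKernel n (1 / 2) * (8 * n + 4)) atTop (𝓝 0) := by
    simpa using (summable_wzKernel_mul_left (t := 0) (k := 1 / 2) (m := 1) (by norm_num)
      (by norm_num) (by simpa using isBigO_mul_natCast_add 8 4)).tendsto_atTop_zero
  have hsum : Summable fun n : ℕ => wzG n (1 / 2) := by
    simpa using summable_wzG_left (t := 0) (k := 1 / 2) (by norm_num) (by norm_num)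
  refine tendsto_nhds_unique hsum.hasSum.tendsto_sum_nat
    (((tendsto_const_nhds (x := 4 / π)).sub hlim).congr fun N => ?_) |>.trans (sub_zero _)
  simp only [fun n : ℕ => wzG_one_half n.cast_nonneg, ← Nat.cast_add_one]
  rw [Finset.sum_range_sub' fun n : ℕ => wzKernel n (1 / 2) * (8 * n + 4), Nat.cast_zero,
    wzKernel_zero_one_half]
  ring

lemma tsum_wzG_eq {t : ℝ} (ht : -1 / 2 < t) :
    ∑' n : ℕ, wzG (n + t) 0 = 4 / π + ∑' k : ℕ, wzF t k := by
  have hlimit : wzLimit t = 4 / π := by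
    rw [← wzLimit_add_one ht, wzLimit_eq_wzLimit_zero (by linarith), wzLimit]
    simp only [wzF_zero_left, add_zero, tsum_zero, sub_zero]
    rw [← tsum_wzG_natCast_eq one_half_pos.le, tsum_wzG_one_half]
  rw [← hlimit, wzLimit, sub_add_cancel]

/-! ### Power series in `sin t` -/

section PowerSeries

variable {c : ℕ → ℝ} {m : ℕ} {w : ℝ}

lemma isBigO_comp_add_one (hc : c =O[atTop] fun k : ℕ => ((k : ℝ) + 1) ^ m) :
    (fun k => c (k + 1)) =O[atTop] fun k : ℕ => ((k : ℝ) + 1) ^ m := by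
  refine (hc.comp_tendsto (tendsto_add_atTop_nat 1)).trans
    (((isBigO_mul_natCast_add 1 2).pow m).congr_left fun _ => ?_)
  simp only [Function.comp_apply, Nat.cast_add_one]
  ring

lemma isBigO_natCast_mul (a b : ℝ) (hc : c =O[atTop] fun k : ℕ => ((k : ℝ) + 1) ^ m) :
    (fun k : ℕ => (a * k + b) * c k) =O[atTop] fun k : ℕ => ((k : ℝ) + 1) ^ (m + 1) :=
  ((isBigO_mul_natCast_add a b).mul hc).congr_right fun _ => (pow_succ' _ m).symm

lemma summable_mul_pow (hc : c =O[atTop] fun k : ℕ => ((k : ℝ) + 1) ^ m) (hw : |w| < 1) :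
    Summable fun k => c k * w ^ k := by
  obtain ⟨r, hwr, hr⟩ := exists_between hw
  refine .of_norm_bounded (summable_mul_of_ratio_tendsto
    (fun k => pow_pos ((abs_nonneg w).trans_lt hwr) k) (fun k => pow_succ r k)
    tendsto_const_nhds hr hc.norm_left) fun k => ?_
  rw [norm_mul, norm_pow, mul_comm]
  gcongr
  exact hwr.le

lemma hasDerivAt_tsum_mul_pow (hc : c =O[atTop] fun k : ℕ => ((k : ℝ) + 1) ^ m) (hw : |w| < 1) :
    HasDerivAt (fun w : ℝ => ∑' k, c k * w ^ k) (∑' k : ℕ, (k + 1) * c (k + 1) * w ^ k) w := by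
  obtain ⟨r, hwr, hr⟩ := exists_between hw
  have hr₀ : 0 ≤ r := (abs_nonneg w).trans hwr.le
  have hwball : w ∈ Metric.ball 0 r := by rwa [mem_ball_zero_iff]
  have hbound (k : ℕ) (y : ℝ) (hy : y ∈ Metric.ball 0 r) :
      ‖c k * (k * y ^ (k - 1))‖ ≤ ‖c k‖ * (k * r ^ (k - 1)) := by
    rw [mem_ball_zero_iff] at hy
    rw [norm_mul, norm_mul, norm_pow, norm_natCast]
    gcongr
  have hsum : Summable fun k : ℕ => ‖c k‖ * (k * r ^ (k - 1)) := by
    refine (summable_nat_add_iff 1).1 ((summable_mul_pow (w := r)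
      (isBigO_natCast_mul 1 1 (isBigO_comp_add_one hc).norm_left)
      (by rwa [abs_of_nonneg hr₀])).congr fun k => ?_)
    rw [Nat.cast_add_one, Nat.add_sub_cancel]
    ring
  have hderiv := hasDerivAt_tsum_of_isPreconnected hsum Metric.isOpen_ball
    (convex_ball (0 : ℝ) r).isPreconnected (g := fun k y => c k * y ^ k)
    (fun k y _ => (hasDerivAt_pow k y).const_mul (c k)) hbound hwball
    (summable_mul_pow hc hw) hwball
  refine hderiv.congr_deriv ?_
  rw [(Summable.of_norm_bounded hsum fun k => hbound k w hwball).tsum_eq_zero_add]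
  simp only [Nat.cast_zero, zero_mul, mul_zero, zero_add, Nat.add_sub_cancel, Nat.cast_add_one]
  exact tsum_congr fun k => by ring

lemma tsum_natCast_mul_mul_pow (hc : c =O[atTop] fun k : ℕ => ((k : ℝ) + 1) ^ m)
    (hw : |w| < 1) :
    ∑' k : ℕ, k * c k * w ^ k = w * ∑' k : ℕ, (k + 1) * c (k + 1) * w ^ k := by
  have hs : Summable fun k : ℕ => k * c k * w ^ k := by
    simpa using summable_mul_pow (isBigO_natCast_mul 1 0 hc) hw
  rw [hs.tsum_eq_zero_add, ← tsum_mul_left]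
  simp only [Nat.cast_zero, zero_mul, zero_add, Nat.cast_add_one]
  exact tsum_congr fun k => by ring

lemma hasDerivAt_tsum_odd_pow {z : ℝ} (hc : c =O[atTop] fun k : ℕ => ((k : ℝ) + 1) ^ m)
    (hz : |z| < 1) :
    HasDerivAt (fun z : ℝ => ∑' k : ℕ, c k * z ^ (2 * k + 1) / (2 * k + 1))
      (∑' k, c k * (z ^ 2) ^ k) z := by
  obtain ⟨r, hzr, hr⟩ := exists_between hz
  have hr₀ : 0 ≤ r := (abs_nonneg z).trans hzr.le
  have hsum : Summable fun k => ‖c k‖ * (r ^ 2) ^ k :=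
    summable_mul_pow hc.norm_left (by rw [abs_of_nonneg (sq_nonneg r)]; nlinarith)
  refine hasDerivAt_tsum_of_isPreconnected hsum Metric.isOpen_ball
    (convex_ball (0 : ℝ) r).isPreconnected (g := fun k z => c k * z ^ (2 * k + 1) / (2 * k + 1))
    (g' := fun k z => c k * (z ^ 2) ^ k) (fun k y _ => ?_) (fun k y hy => ?_)
    (Metric.mem_ball_self ((abs_nonneg z).trans_lt hzr)) (by simp [summable_zero])
    (by rwa [mem_ball_zero_iff])
  · refine (((hasDerivAt_pow (2 * k + 1) y).const_mul (c k)).div_const _).congr_deriv ?_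
    rw [Nat.add_sub_cancel, pow_mul]
    push_cast
    field_simp
  · rw [mem_ball_zero_iff] at hy
    rw [norm_mul, norm_pow, norm_pow]
    gcongr

end PowerSeries

/-- The normalized central binomial coefficient `(1/2)_k / k!`. -/
noncomputable def centralCoeff (k : ℕ) : ℝ := k.centralBinom / 4 ^ k

lemma centralCoeff_zero : centralCoeff 0 = 1 := by simp [centralCoeff]

lemma centralCoeff_succ (k : ℕ) :
    (k + 1) * centralCoeff (k + 1) = (k + 1 / 2) * centralCoeff k := by
  have h : ((k : ℝ) + 1) * (k + 1).centralBinom = 2 * (2 * k + 1) * k.centralBinom := by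
    exact_mod_cast k.succ_mul_centralBinom_succ
  rw [centralCoeff, centralCoeff, mul_div_assoc', h, pow_succ]
  ring

lemma centralCoeff_pos (k : ℕ) : 0 < centralCoeff k :=
  div_pos (Nat.cast_pos.2 k.centralBinom_pos) (by positivity)

lemma centralCoeff_le_one (k : ℕ) : centralCoeff k ≤ 1 := by
  rw [centralCoeff, div_le_one (by positivity)]
  exact_mod_cast k.centralBinom_le_four_pow

lemma isBigO_centralCoeff_mul {c : ℕ → ℝ} {m : ℕ}
    (hc : c =O[atTop] fun k : ℕ => ((k : ℝ) + 1) ^ m) :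
    (fun k => centralCoeff k * c k) =O[atTop] fun k : ℕ => ((k : ℝ) + 1) ^ m := by
  refine (isBigO_of_le _ fun k => ?_).trans hc
  rw [norm_mul, norm_of_nonneg (centralCoeff_pos k).le]
  exact mul_le_of_le_one_left (norm_nonneg _) (centralCoeff_le_one k)

lemma isBigO_one_pow_zero :
    (fun _ : ℕ => (1 : ℝ)) =O[atTop] fun k : ℕ => ((k : ℝ) + 1) ^ 0 :=
  (isBigO_refl _ _).congr_right fun _ => (pow_zero _).symm

lemma isBigO_centralCoeff : centralCoeff =O[atTop] fun k : ℕ => ((k : ℝ) + 1) ^ 0 :=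
  (isBigO_centralCoeff_mul isBigO_one_pow_zero).congr_left fun k => mul_one (centralCoeff k)

lemma abs_sin_lt_one {t : ℝ} (ht : t ∈ Ioo (-(π / 2)) (π / 2)) : |sin t| < 1 := by
  rw [← sq_lt_one_iff_abs_lt_one, sin_sq]
  exact sub_lt_self 1 (pow_pos (cos_pos_of_mem_Ioo ht) 2)

lemma abs_sin_sq_lt_one {t : ℝ} (ht : t ∈ Ioo (-(π / 2)) (π / 2)) : |sin t ^ 2| < 1 := by
  rw [abs_pow]
  exact pow_lt_one₀ (abs_nonneg _) (abs_sin_lt_one ht) two_ne_zero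

lemma zero_mem_Ioo_neg_pi_div_two : (0 : ℝ) ∈ Ioo (-(π / 2)) (π / 2) :=
  ⟨by linarith [pi_pos], by linarith [pi_pos]⟩

lemma hasDerivAt_cos_mul_tsum {c : ℕ → ℝ} {m : ℕ}
    (hc : c =O[atTop] fun k : ℕ => ((k : ℝ) + 1) ^ m) {t : ℝ} (ht : t ∈ Ioo (-(π / 2)) (π / 2)) :
    HasDerivAt (fun t => cos t * ∑' k, centralCoeff k * c k * (sin t ^ 2) ^ k)
      (2 * sin t * ∑' k : ℕ, (k + 1 / 2) * centralCoeff k * (c (k + 1) - c k) * (sin t ^ 2) ^ k)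
      t := by
  have hw := abs_sin_sq_lt_one ht
  have hb := isBigO_centralCoeff_mul hc
  have hseries : ∑' k : ℕ, (k + 1 / 2) * centralCoeff k * (c (k + 1) - c k) * (sin t ^ 2) ^ k
      = (1 - sin t ^ 2) * ∑' k : ℕ, (k + 1) * (centralCoeff (k + 1) * c (k + 1)) * (sin t ^ 2) ^ k
        - 1 / 2 * ∑' k, centralCoeff k * c k * (sin t ^ 2) ^ k := by
    have h₀ := summable_mul_pow hb hw
    have h₁ : Summable fun k : ℕ => k * (centralCoeff k * c k) * (sin t ^ 2) ^ k := by
      simpa using summable_mul_pow (isBigO_natCast_mul 1 0 hb) hw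
    have h₂ : Summable fun k : ℕ =>
        (k + 1) * (centralCoeff (k + 1) * c (k + 1)) * (sin t ^ 2) ^ k := by
      simpa using summable_mul_pow (isBigO_natCast_mul 1 1 (isBigO_comp_add_one hb)) hw
    rw [sub_mul, one_mul, ← tsum_natCast_mul_mul_pow hb hw, ← tsum_mul_left, ← h₂.tsum_sub h₁,
      ← (h₂.sub h₁).tsum_sub (h₀.mul_left _)]
    refine tsum_congr fun k => ?_
    rw [← mul_assoc ((k : ℝ) + 1), centralCoeff_succ]
    ring
  have hderiv := (hasDerivAt_cos t).mul
    ((hasDerivAt_tsum_mul_pow hb hw).comp t ((hasDerivAt_sin t).pow 2))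
  refine hderiv.congr_deriv ?_
  rw [hseries, ← cos_sq']
  simp only [Function.comp_apply, Pi.pow_apply]
  push_cast
  ring

lemma cos_mul_tsum_centralCoeff {t : ℝ} (ht : t ∈ Ioo (-(π / 2)) (π / 2)) :
    cos t * ∑' k, centralCoeff k * (sin t ^ 2) ^ k = 1 := by
  have hderiv (s : ℝ) (hs : s ∈ Ioo (-(π / 2)) (π / 2)) :
      HasDerivAt (fun t => cos t * ∑' k, centralCoeff k * (sin t ^ 2) ^ k) 0 s := by
    simpa using hasDerivAt_cos_mul_tsum isBigO_one_pow_zero hs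
  rw [isOpen_Ioo.is_const_of_deriv_eq_zero isPreconnected_Ioo
    (fun s hs => (hderiv s hs).differentiableAt.differentiableWithinAt)
    (fun s hs => (hderiv s hs).deriv) ht zero_mem_Ioo_neg_pi_div_two,
    tsum_eq_single 0 fun k hk => by simp [hk]]
  simp [centralCoeff_zero]

lemma sin_mul_tsum_centralCoeff_succ {t : ℝ} (ht : t ∈ Ioo (-(π / 2)) (π / 2)) :
    sin t * ∑' k, centralCoeff (k + 1) * (sin t ^ 2) ^ k = tan t - tan (t / 2) := by
  have hcos := (cos_pos_of_mem_Ioo ht).ne'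
  have hcos₂ : cos (t / 2) ≠ 0 := (cos_pos_of_mem_Ioo
    ⟨by linarith [ht.1, pi_pos], by linarith [ht.2, pi_pos]⟩).ne'
  have hshift : sin t ^ 2 * ∑' k, centralCoeff (k + 1) * (sin t ^ 2) ^ k = 1 / cos t - 1 := by
    have hA := cos_mul_tsum_centralCoeff ht
    rw [(summable_mul_pow isBigO_centralCoeff (abs_sin_sq_lt_one ht)).tsum_eq_zero_add,
      centralCoeff_zero, pow_zero, mul_one] at hA
    have hpow : ∑' k, centralCoeff (k + 1) * (sin t ^ 2) ^ (k + 1)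
        = sin t ^ 2 * ∑' k, centralCoeff (k + 1) * (sin t ^ 2) ^ k := by
      rw [← tsum_mul_left]
      exact tsum_congr fun k => by ring
    rw [hpow] at hA
    rw [eq_sub_iff_add_eq', eq_div_iff hcos]
    linarith
  rcases eq_or_ne (sin t) 0 with h₀ | h₀
  · obtain rfl : t = 0 := (sin_eq_zero_iff_of_lt_of_lt (by linarith [ht.1, pi_pos])
      (by linarith [ht.2, pi_pos])).1 h₀
    simp
  · have hhalf : sin t * tan (t / 2) = 1 - cos t := by
      have hsin : sin t = 2 * sin (t / 2) * cos (t / 2) := by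
        rw [← sin_two_mul, mul_div_cancel₀ _ two_ne_zero]
      rw [tan_eq_sin_div_cos, hsin, mul_div_assoc', div_eq_iff hcos₂,
        ← mul_div_cancel₀ t (two_ne_zero (α := ℝ)), cos_two_mul, mul_div_cancel₀ _ two_ne_zero]
      linear_combination 2 * cos (t / 2) * sin_sq_add_cos_sq (t / 2)
    refine mul_left_cancel₀ h₀ ?_
    rw [← mul_assoc, ← sq, hshift, mul_sub, hhalf, tan_eq_sin_div_cos]
    field_simp
    linear_combination -sin_sq_add_cos_sq t

/-- The harmonic sum arising as logarithmic derivative of `(z + 1 / 2)_k ^ 3 / (z + 1)_k` at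
`z = 0`. -/
noncomputable def harmonicCoeff (k : ℕ) : ℝ :=
  ∑ j ∈ Finset.range k, (3 / ((j : ℝ) + 1 / 2) - 1 / (j + 1))

lemma isBigO_harmonicCoeff : harmonicCoeff =O[atTop] fun k : ℕ => ((k : ℝ) + 1) ^ 1 := by
  refine .of_bound 6 (.of_forall fun k => ?_)
  have hterm (j : ℕ) : ‖3 / ((j : ℝ) + 1 / 2) - 1 / (j + 1)‖ ≤ 6 := by
    have h₁ : 3 / ((j : ℝ) + 1 / 2) ≤ 6 := by
      rw [div_le_iff₀ (by positivity)]
      linarith [j.cast_nonneg (α := ℝ)]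
    have h₂ : 1 / ((j : ℝ) + 1) ≤ 3 / ((j : ℝ) + 1 / 2) := by
      rw [div_le_div_iff₀ (by positivity) (by positivity)]
      linarith [j.cast_nonneg (α := ℝ)]
    have h₃ : 0 ≤ 1 / ((j : ℝ) + 1) := by positivity
    rw [norm_of_nonneg (by linarith)]
    linarith
  refine (norm_sum_le_of_le _ fun j _ => hterm j).trans ?_
  rw [Finset.sum_const, Finset.card_range, nsmul_eq_mul, norm_of_nonneg (by positivity)]
  linarith

lemma centralCoeff_mul_harmonicCoeff_sub (k : ℕ) :
    (k + 1 / 2) * centralCoeff k * (harmonicCoeff (k + 1) - harmonicCoeff k)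
      = 3 * centralCoeff k - centralCoeff (k + 1) := by
  have h : centralCoeff (k + 1) = (k + 1 / 2) * centralCoeff k / (k + 1) := by
    rw [← centralCoeff_succ]
    field_simp
  rw [harmonicCoeff, harmonicCoeff, Finset.sum_range_succ, add_sub_cancel_left, h]
  field_simp

lemma cos_mul_tsum_harmonicCoeff {t : ℝ} (ht : t ∈ Ioo (-(π / 2)) (π / 2)) :
    cos t * ∑' k, centralCoeff k * harmonicCoeff k * (sin t ^ 2) ^ k
      = -4 * log (cos t) - 4 * log (cos (t / 2)) := by
  have hseries (s : ℝ) (hs : s ∈ Ioo (-(π / 2)) (π / 2)) :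
      HasDerivAt (fun t => cos t * ∑' k, centralCoeff k * harmonicCoeff k * (sin t ^ 2) ^ k)
        (4 * tan s + 2 * tan (s / 2)) s := by
    have hA := summable_mul_pow isBigO_centralCoeff (abs_sin_sq_lt_one hs)
    have hB := summable_mul_pow (isBigO_comp_add_one isBigO_centralCoeff) (abs_sin_sq_lt_one hs)
    refine (hasDerivAt_cos_mul_tsum isBigO_harmonicCoeff hs).congr_deriv ?_
    simp only [centralCoeff_mul_harmonicCoeff_sub, sub_mul, mul_assoc (3 : ℝ)]
    rw [(hA.mul_left 3).tsum_sub hB, tsum_mul_left,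
      eq_div_of_mul_eq (cos_pos_of_mem_Ioo hs).ne' ((mul_comm _ _).trans
        (cos_mul_tsum_centralCoeff hs)), mul_sub, mul_assoc 2 (sin s) (tsum _),
      sin_mul_tsum_centralCoeff_succ hs, tan_eq_sin_div_cos s]
    ring
  have hlog (s : ℝ) (hs : s ∈ Ioo (-(π / 2)) (π / 2)) :
      HasDerivAt (fun t => -4 * log (cos t) - 4 * log (cos (t / 2)))
        (4 * tan s + 2 * tan (s / 2)) s := by
    have h₁ := (hasDerivAt_cos s).log (cos_pos_of_mem_Ioo hs).ne'
    have h₂ := ((hasDerivAt_id' s).div_const 2).cos.log (cos_pos_of_mem_Ioo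
      ⟨by linarith [hs.1, pi_pos], by linarith [hs.2, pi_pos]⟩).ne'
    refine ((h₁.const_mul (-4)).sub (h₂.const_mul 4)).congr_deriv ?_
    rw [tan_eq_sin_div_cos, tan_eq_sin_div_cos]
    ring
  refine isOpen_Ioo.eqOn_of_deriv_eq isPreconnected_Ioo
    (fun s hs => (hseries s hs).differentiableAt.differentiableWithinAt)
    (fun s hs => (hlog s hs).differentiableAt.differentiableWithinAt)
    (fun s hs => (hseries s hs).deriv.trans (hlog s hs).deriv.symm)
    zero_mem_Ioo_neg_pi_div_two ?_ ht
  rw [tsum_eq_single 0 fun k hk => by simp [hk]]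
  simp [harmonicCoeff]

lemma tsum_centralCoeff_mul_sin_pow {t : ℝ} (ht : t ∈ Ioo (-(π / 2)) (π / 2)) :
    ∑' k : ℕ, centralCoeff k * sin t ^ (2 * k + 1) / (2 * k + 1) = t := by
  have hderiv (s : ℝ) (hs : s ∈ Ioo (-(π / 2)) (π / 2)) :
      HasDerivAt (fun t => ∑' k : ℕ, centralCoeff k * sin t ^ (2 * k + 1) / (2 * k + 1)) 1 s :=
    ((hasDerivAt_tsum_odd_pow isBigO_centralCoeff (abs_sin_lt_one hs)).comp s
      (hasDerivAt_sin s)).congr_deriv ((mul_comm _ _).trans (cos_mul_tsum_centralCoeff hs))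
  exact isOpen_Ioo.eqOn_of_deriv_eq isPreconnected_Ioo
    (fun s hs => (hderiv s hs).differentiableAt.differentiableWithinAt)
    differentiableOn_id (fun s hs => (hderiv s hs).deriv.trans (deriv_id s).symm)
    zero_mem_Ioo_neg_pi_div_two (by simp) ht

/-! ### Log-sine integrals -/

lemma eqOn_Icc_of_hasDerivAt {f g f' : ℝ → ℝ} {b : ℝ} (hf : ContinuousOn f (Icc 0 b))
    (hg : ContinuousOn g (Icc 0 b)) (hf' : ∀ t ∈ Ioo 0 b, HasDerivAt f (f' t) t)
    (hg' : ∀ t ∈ Ioo 0 b, HasDerivAt g (f' t) t) (h₀ : f 0 = g 0) : EqOn f g (Icc 0 b) := by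
  intro x hx
  rcases hx.1.eq_or_lt with rfl | hx₀
  · exact h₀
  have hsub : Ioo 0 x ⊆ Ioo 0 b := Ioo_subset_Ioo_right hx.2
  obtain ⟨t, -, ht⟩ := exists_hasDerivAt_eq_slope (fun t => f t - g t) (fun _ => 0) hx₀
    ((hf.sub hg).mono (Icc_subset_Icc_right hx.2)) fun t ht =>
      ((hf' t (hsub ht)).sub (hg' t (hsub ht))).congr_deriv (sub_self _)
  rw [eq_comm, div_eq_zero_iff] at ht
  rcases ht with ht | ht <;> linarith

/-- The log-sine integral `∫ t in 0..a, log (2 sin t)`; it equals `-Cl₂ (2a) / 2` in terms of the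
Clausen function. -/
noncomputable def logSinIntegral (a : ℝ) : ℝ := ∫ t in 0..a, log (2 * sin t)

lemma intervalIntegrable_log_two_mul_sin (a b : ℝ) :
    IntervalIntegrable (fun t => log (2 * sin t)) MeasureTheory.volume a b :=
  MeromorphicOn.intervalIntegrable_log (f := fun t => 2 * sin t) fun t _ =>
    (by fun_prop : AnalyticAt ℝ (fun t => 2 * sin t) t).meromorphicAt

lemma continuous_logSinIntegral : Continuous logSinIntegral :=
  intervalIntegral.continuous_primitive intervalIntegrable_log_two_mul_sin 0

lemma hasDerivAt_logSinIntegral {a : ℝ} (ha : a ∈ Ioo 0 π) :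
    HasDerivAt logSinIntegral (log (2 * sin a)) a := by
  have hcont : ContinuousAt (fun t => log (2 * sin t)) a :=
    (by fun_prop : ContinuousAt (fun t => 2 * sin t) a).log
      (mul_pos two_pos (sin_pos_of_mem_Ioo ha)).ne'
  have hmeas : Measurable fun t => log (2 * sin t) := by fun_prop
  exact intervalIntegral.integral_hasDerivAt_right (intervalIntegrable_log_two_mul_sin 0 a)
    hmeas.stronglyMeasurable.stronglyMeasurableAtFilter hcont

lemma logSinIntegral_zero : logSinIntegral 0 = 0 := intervalIntegral.integral_same

lemma logSinIntegral_pi_div_two : logSinIntegral (π / 2) = 0 := by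
  have hcongr : logSinIntegral (π / 2) = ∫ t in 0..π / 2, (log 2 + log (sin t)) := by
    refine intervalIntegral.integral_congr_Ioo_of_le (by positivity) fun t ht => ?_
    exact log_mul two_ne_zero (sin_pos_of_mem_Ioo ⟨ht.1, by linarith [ht.2, pi_pos]⟩).ne'
  have hsplit := intervalIntegral.integral_add (a := 0) (b := π / 2)
    (intervalIntegrable_const (c := log 2)) intervalIntegrable_log_sin
  simp only [Function.comp_apply] at hsplit
  rw [hcongr, hsplit, intervalIntegral.integral_const, integral_log_sin_zero_pi_div_two,
    smul_eq_mul]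
  ring

lemma hasDerivAt_logSinIntegral_pi_div_two_sub {a : ℝ} (ha : a ∈ Ioo (-(π / 2)) (π / 2)) :
    HasDerivAt (fun a => logSinIntegral (π / 2 - a)) (-log (2 * cos a)) a := by
  have h := (hasDerivAt_logSinIntegral (a := π / 2 - a)
    ⟨by linarith [ha.2], by linarith [ha.1]⟩).comp a ((hasDerivAt_id' a).const_sub (π / 2))
  exact h.congr_deriv (by rw [sin_pi_div_two_sub, mul_neg_one])

lemma logSinIntegral_two_mul {a : ℝ} (ha : a ∈ Icc 0 (π / 2)) :
    logSinIntegral (2 * a) = 2 * logSinIntegral a - 2 * logSinIntegral (π / 2 - a) := by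
  have hS := continuous_logSinIntegral
  refine eqOn_Icc_of_hasDerivAt (f' := fun t => 2 * log (2 * sin (2 * t)))
    (f := fun a => logSinIntegral (2 * a))
    (g := fun a => 2 * logSinIntegral a - 2 * logSinIntegral (π / 2 - a))
    (by fun_prop) (by fun_prop) (fun t ht => ?_) (fun t ht => ?_)
    (by simp [logSinIntegral_zero, logSinIntegral_pi_div_two]) ha
  · exact ((hasDerivAt_logSinIntegral ⟨by linarith [ht.1], by linarith [ht.2]⟩).comp t
      ((hasDerivAt_id' t).const_mul 2)).congr_deriv (by ring)
  · have ht' : t ∈ Ioo (-(π / 2)) (π / 2) := ⟨by linarith [ht.1, pi_pos], ht.2⟩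
    have hπ : t ∈ Ioo 0 π := ⟨ht.1, by linarith [ht.2, pi_pos]⟩
    have hlog : log (2 * sin (2 * t)) = log (2 * sin t) + log (2 * cos t) := by
      rw [← log_mul (mul_pos two_pos (sin_pos_of_mem_Ioo hπ)).ne'
        (mul_pos two_pos (cos_pos_of_mem_Ioo ht')).ne', sin_two_mul]
      ring_nf
    refine (((hasDerivAt_logSinIntegral hπ).const_mul 2).sub
      ((hasDerivAt_logSinIntegral_pi_div_two_sub ht').const_mul 2)).congr_deriv ?_
    rw [hlog]
    ring

lemma two_mul_sin_three_mul (t : ℝ) :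
    2 * sin (3 * t) = 2 * sin t * (2 * sin (π / 3 - t)) * (2 * sin (π / 3 + t)) := by
  rw [sin_three_mul, sin_sub, sin_add, sin_pi_div_three, cos_pi_div_three]
  have h₃ : √(3 : ℝ) ^ 2 = 3 := sq_sqrt (by norm_num)
  linear_combination (-2 * sin t * cos t ^ 2) * h₃ - 6 * sin t * sin_sq_add_cos_sq t

lemma logSinIntegral_three_mul {a : ℝ} (ha : a ∈ Icc 0 (π / 3)) :
    logSinIntegral (3 * a)
      = 3 * (logSinIntegral a + logSinIntegral (π / 3 + a) - logSinIntegral (π / 3 - a)) := by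
  have hS := continuous_logSinIntegral
  refine eqOn_Icc_of_hasDerivAt (f' := fun t => 3 * log (2 * sin (3 * t)))
    (f := fun a => logSinIntegral (3 * a))
    (g := fun a => 3 * (logSinIntegral a + logSinIntegral (π / 3 + a) - logSinIntegral (π / 3 - a)))
    (by fun_prop) (by fun_prop) (fun t ht => ?_) (fun t ht => ?_)
    (by simp [logSinIntegral_zero]) ha
  · exact ((hasDerivAt_logSinIntegral ⟨by linarith [ht.1], by linarith [ht.2]⟩).comp t
      ((hasDerivAt_id' t).const_mul 3)).congr_deriv (by ring)
  · have h₀ : t ∈ Ioo 0 π := ⟨ht.1, by linarith [ht.2, pi_pos]⟩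
    have h₁ : π / 3 - t ∈ Ioo 0 π := ⟨by linarith [ht.2], by linarith [ht.1, pi_pos]⟩
    have h₂ : π / 3 + t ∈ Ioo 0 π := ⟨by linarith [ht.1, pi_pos], by linarith [ht.2, pi_pos]⟩
    have hpos {s : ℝ} (hs : s ∈ Ioo 0 π) : 0 < 2 * sin s := mul_pos two_pos (sin_pos_of_mem_Ioo hs)
    refine ((((hasDerivAt_logSinIntegral h₀).add ((hasDerivAt_logSinIntegral h₂).comp t
      ((hasDerivAt_id' t).const_add _))).sub ((hasDerivAt_logSinIntegral h₁).comp t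
      ((hasDerivAt_id' t).const_sub _))).const_mul 3).congr_deriv ?_
    rw [two_mul_sin_three_mul, log_mul (mul_pos (hpos h₀) (hpos h₁)).ne' (hpos h₂).ne',
      log_mul (hpos h₀).ne' (hpos h₁).ne']
    ring

lemma continuousWithinAt_mul_log_zero {g : ℝ → ℝ} {s : Set ℝ} {C : ℝ}
    (hg : ContinuousWithinAt g s 0) (hg₀ : g 0 = 0) (hle : ∀ t ∈ s, |t| ≤ C * |g t|) :
    ContinuousWithinAt (fun t => t * log (g t)) s 0 := by
  have hlim : Tendsto (fun t => C * |g t * log (g t)|) (𝓝[s] 0) (𝓝 0) := by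
    simpa [hg₀] using ((continuous_mul_log.tendsto (g 0)).comp hg).abs.const_mul C
  rw [ContinuousWithinAt, zero_mul]
  refine squeeze_zero_norm' ?_ hlim
  filter_upwards [self_mem_nhdsWithin] with t ht
  rw [norm_mul, norm_eq_abs, norm_eq_abs, abs_mul, ← mul_assoc]
  exact mul_le_mul_of_nonneg_right (hle t ht) (abs_nonneg _)

/-- The odd dilogarithmic series `∑ cₖ z²ᵏ⁺¹ / (2k+1)²`. -/
noncomputable def oddDilog (c : ℕ → ℝ) (z : ℝ) : ℝ :=
  ∑' k : ℕ, c k * z ^ (2 * k + 1) / (2 * k + 1) ^ 2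

lemma oddDilog_zero (c : ℕ → ℝ) : oddDilog c 0 = 0 := by simp [oddDilog]

lemma summable_one_div_two_mul_add_one_sq : Summable fun k : ℕ => 1 / (2 * (k : ℝ) + 1) ^ 2 := by
  refine .of_nonneg_of_le (fun k => by positivity) (fun k => ?_)
    ((summable_nat_add_iff 1).2 (summable_one_div_nat_pow.2 one_lt_two))
  push_cast
  gcongr
  linarith [k.cast_nonneg (α := ℝ)]

section OddDilog

variable {c : ℕ → ℝ}

lemma norm_oddDilog_term_le (hc : ∀ k, |c k| ≤ 1) {z : ℝ} (hz : z ∈ Icc (-1) 1) (k : ℕ) :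
    ‖c k * z ^ (2 * k + 1) / (2 * k + 1) ^ 2‖ ≤ 1 / (2 * (k : ℝ) + 1) ^ 2 := by
  rw [norm_div, norm_mul, norm_pow, norm_pow, norm_of_nonneg (by positivity : 0 ≤ 2 * (k : ℝ) + 1)]
  gcongr
  exact mul_le_one₀ (hc k) (by positivity) (pow_le_one₀ (norm_nonneg z) (abs_le.2 hz))

lemma continuousOn_oddDilog (hc : ∀ k, |c k| ≤ 1) : ContinuousOn (oddDilog c) (Icc (-1) 1) :=
  continuousOn_tsum (fun k => by fun_prop) summable_one_div_two_mul_add_one_sq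
    fun k _ hz => norm_oddDilog_term_le hc hz k

lemma hasDerivAt_oddDilog (hc : ∀ k, |c k| ≤ 1) {z : ℝ} (hz₀ : z ≠ 0) (hz : |z| < 1) :
    HasDerivAt (oddDilog c) ((∑' k : ℕ, c k * z ^ (2 * k + 1) / (2 * k + 1)) / z) z := by
  have hO : (fun k : ℕ => c k / (2 * k + 1)) =O[atTop] fun k : ℕ => ((k : ℝ) + 1) ^ 0 := by
    refine (isBigO_of_le _ fun k => ?_).trans isBigO_one_pow_zero
    rw [norm_div, norm_one, norm_of_nonneg (by positivity : 0 ≤ 2 * (k : ℝ) + 1)]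
    exact div_le_one_of_le₀ ((hc k).trans (by linarith [k.cast_nonneg (α := ℝ)])) (by positivity)
  refine ((hasDerivAt_tsum_odd_pow hO hz).congr_deriv ?_).congr_of_eventuallyEq
    (.of_forall fun z => ?_)
  · rw [← tsum_div_const]
    refine tsum_congr fun k => ?_
    rw [pow_succ z (2 * k), pow_mul]
    field_simp
  · exact tsum_congr fun k => by field_simp

-- If `∑ cₖ g²ᵏ⁺¹ / (2k+1)` inverts `g`, then `t log g - oddDilog c g` is a primitive of `log g`.
lemma eq_mul_log_sub_oddDilog (hc : ∀ k, |c k| ≤ 1) {F g g' : ℝ → ℝ} {b C : ℝ} (hb : 0 ≤ b)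
    (hg : ContinuousOn g (Icc 0 b)) (hg' : ∀ t ∈ Ioo 0 b, HasDerivAt g (g' t) t)
    (hmono : StrictMonoOn g (Icc 0 b)) (hg₀ : g 0 = 0) (hgb : g b ≤ 1)
    (hle : ∀ t ∈ Icc 0 b, t ≤ C * g t)
    (hsum : ∀ t ∈ Ioo 0 b, ∑' k : ℕ, c k * g t ^ (2 * k + 1) / (2 * k + 1) = t)
    (hF : ContinuousOn F (Icc 0 b)) (hF' : ∀ t ∈ Ioo 0 b, HasDerivAt F (log (g t)) t)
    (hF₀ : F 0 = 0) : F b = b * log (g b) - oddDilog c (g b) := by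
  have h₀ : (0 : ℝ) ∈ Icc 0 b := left_mem_Icc.2 hb
  have hb' : b ∈ Icc 0 b := right_mem_Icc.2 hb
  have hnonneg (t : ℝ) (ht : t ∈ Icc 0 b) : 0 ≤ g t :=
    hg₀ ▸ hmono.monotoneOn h₀ ht ht.1
  have hpos (t : ℝ) (ht : t ∈ Icc 0 b) (ht₀ : 0 < t) : 0 < g t := hg₀ ▸ hmono h₀ ht ht₀
  have hlog : ContinuousOn (fun t => t * log (g t)) (Icc 0 b) := fun t ht => by
    rcases ht.1.eq_or_lt with rfl | ht₀
    · refine continuousWithinAt_mul_log_zero (C := C) (hg 0 ht) hg₀ fun s hs => ?_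
      rw [abs_of_nonneg hs.1, abs_of_nonneg (hnonneg s hs)]
      exact hle s hs
    · exact continuousWithinAt_id.mul ((hg t ht).log (hpos t ht ht₀).ne')
  have hdilog : ContinuousOn (fun t => oddDilog c (g t)) (Icc 0 b) :=
    (continuousOn_oddDilog hc).comp hg fun t ht =>
      ⟨by linarith [hnonneg t ht], (hmono.monotoneOn ht hb' ht.2).trans hgb⟩
  refine eqOn_Icc_of_hasDerivAt hF (hlog.sub hdilog) hF' (fun t ht => ?_)
    (by simp [hF₀, hg₀, oddDilog_zero]) hb'
  have htI := Ioo_subset_Icc_self ht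
  have hgt := hpos t htI ht.1
  have hgt₁ : |g t| < 1 := by
    rw [abs_of_pos hgt]
    exact (hmono htI hb' ht.2).trans_le hgb
  refine (((hasDerivAt_id' t).mul ((hg' t ht).log hgt.ne')).sub
    ((hasDerivAt_oddDilog hc hgt.ne' hgt₁).comp t (hg' t ht))).congr_deriv ?_
  rw [hsum t ht]
  ring

end OddDilog

lemma two_mul_logSinIntegral_pi_div_four : 2 * logSinIntegral (π / 4) = -catalan' := by
  have hS := continuous_logSinIntegral
  have hmem {t : ℝ} (ht : t ∈ Icc 0 (π / 4)) : t ∈ Ioo (-(π / 2)) (π / 2) :=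
    ⟨by linarith [ht.1, pi_pos], by linarith [ht.2, pi_pos]⟩
  have hmono : StrictMonoOn tan (Icc 0 (π / 4)) := strictMonoOn_tan.mono fun t ht => hmem ht
  have key := eq_mul_log_sub_oddDilog (c := fun k => (-1) ^ k) (g := tan) (b := π / 4) (C := 1)
    (F := fun t => logSinIntegral t + logSinIntegral (π / 2 - t))
    (fun k => by simp) (by positivity)
    (fun t ht => (continuousAt_tan.2 (cos_pos_of_mem_Ioo (hmem ht)).ne').continuousWithinAt)
    (fun t ht => hasDerivAt_tan (cos_pos_of_mem_Ioo (hmem (Ioo_subset_Icc_self ht))).ne')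
    hmono tan_zero tan_pi_div_four.le
    (fun t ht => (le_tan ht.1 (hmem ht).2).trans_eq (one_mul _).symm)
    (fun t ht => ?_) (by fun_prop) (fun t ht => ?_)
    (by simp [logSinIntegral_zero, logSinIntegral_pi_div_two])
  · have hdilog : oddDilog (fun k => (-1) ^ k) 1 = catalan' := by simp [oddDilog, catalan']
    rw [tan_pi_div_four, log_one, mul_zero, zero_sub, hdilog] at key
    rw [← key]
    ring_nf
  · have htI := Ioo_subset_Icc_self ht
    have htan : ‖tan t‖ < 1 := by
      rw [norm_of_nonneg (tan_nonneg_of_nonneg_of_le_pi_div_two ht.1.le (hmem htI).2.le),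
        ← tan_pi_div_four]
      exact hmono htI (right_mem_Icc.2 (by positivity)) ht.2
    have hsum := (hasSum_arctan htan).tsum_eq
    push_cast at hsum
    rw [hsum, arctan_tan (hmem htI).1 (hmem htI).2]
  · have htI := hmem (Ioo_subset_Icc_self ht)
    have hπ : t ∈ Ioo 0 π := ⟨ht.1, by linarith [htI.2, pi_pos]⟩
    refine ((hasDerivAt_logSinIntegral hπ).add
      (hasDerivAt_logSinIntegral_pi_div_two_sub htI)).congr_deriv ?_
    rw [← sub_eq_add_neg, ← log_div (mul_pos two_pos (sin_pos_of_mem_Ioo hπ)).ne'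
      (mul_pos two_pos (cos_pos_of_mem_Ioo htI)).ne', mul_div_mul_left _ _ two_ne_zero,
      tan_eq_sin_div_cos]

lemma abs_centralCoeff_le_one (k : ℕ) : |centralCoeff k| ≤ 1 :=
  (abs_of_pos (centralCoeff_pos k)).trans_le (centralCoeff_le_one k)

lemma logSinIntegral_pi_div_six : logSinIntegral (π / 6) = -oddDilog centralCoeff (1 / 2) := by
  have hS := continuous_logSinIntegral
  have hmem {t : ℝ} (ht : t ∈ Icc 0 (π / 6)) : t ∈ Ioo (-(π / 2)) (π / 2) :=
    ⟨by linarith [ht.1, pi_pos], by linarith [ht.2, pi_pos]⟩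
  have key := eq_mul_log_sub_oddDilog (c := centralCoeff) (g := sin) (b := π / 6) (C := π / 2)
    (F := fun t => logSinIntegral t - t * log 2)
    abs_centralCoeff_le_one (by positivity)
    continuousOn_sin (fun t _ => hasDerivAt_sin t)
    (strictMonoOn_sin.mono fun t ht => Ioo_subset_Icc_self (hmem ht)) sin_zero (sin_le_one _)
    (fun t ht => ?_)
    (fun t ht => tsum_centralCoeff_mul_sin_pow (hmem (Ioo_subset_Icc_self ht)))
    (by fun_prop) (fun t ht => ?_) (by simp [logSinIntegral_zero])
  · rw [sin_pi_div_six, log_div one_ne_zero two_ne_zero, log_one] at key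
    linarith
  · rw [mul_comm, ← div_le_iff₀ (by positivity)]
    exact (by ring : t / (π / 2) = 2 / π * t).trans_le (mul_le_sin ht.1 (hmem ht).2.le)
  · have hπ : t ∈ Ioo 0 π := ⟨ht.1, by linarith [ht.2, pi_pos]⟩
    refine ((hasDerivAt_logSinIntegral hπ).sub ((hasDerivAt_id' t).mul_const _)).congr_deriv ?_
    rw [log_mul two_ne_zero (sin_pos_of_mem_Ioo hπ).ne']
    ring

lemma tsum_centralCoeff_mul_harmonicCoeff_mul_sin_pow {t : ℝ}
    (ht : t ∈ Ioo (-(π / 2)) (π / 2)) :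
    ∑' k : ℕ, centralCoeff k * harmonicCoeff k * sin t ^ (2 * k + 1) / (2 * k + 1)
      = 4 * logSinIntegral (π / 2 - t) + 8 * logSinIntegral (π / 2 - t / 2)
        + 8 * log 2 * t := by
  have hseries (s : ℝ) (hs : s ∈ Ioo (-(π / 2)) (π / 2)) :
      HasDerivAt (fun t => ∑' k : ℕ, centralCoeff k * harmonicCoeff k * sin t ^ (2 * k + 1)
        / (2 * k + 1)) (-4 * log (cos s) - 4 * log (cos (s / 2))) s :=
    ((hasDerivAt_tsum_odd_pow (isBigO_centralCoeff_mul isBigO_harmonicCoeff)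
      (abs_sin_lt_one hs)).comp s (hasDerivAt_sin s)).congr_deriv
      ((mul_comm _ _).trans (cos_mul_tsum_harmonicCoeff hs))
  have hint (s : ℝ) (hs : s ∈ Ioo (-(π / 2)) (π / 2)) :
      HasDerivAt (fun t => 4 * logSinIntegral (π / 2 - t) + 8 * logSinIntegral (π / 2 - t / 2)
        + 8 * log 2 * t) (-4 * log (cos s) - 4 * log (cos (s / 2))) s := by
    have hs₂ : s / 2 ∈ Ioo (-(π / 2)) (π / 2) :=
      ⟨by linarith [hs.1, pi_pos], by linarith [hs.2, pi_pos]⟩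
    refine ((((hasDerivAt_logSinIntegral_pi_div_two_sub hs).const_mul 4).add
      (((hasDerivAt_logSinIntegral_pi_div_two_sub hs₂).comp s
        ((hasDerivAt_id' s).div_const 2)).const_mul 8)).add
      ((hasDerivAt_id' s).const_mul _)).congr_deriv ?_
    rw [log_mul two_ne_zero (cos_pos_of_mem_Ioo hs).ne',
      log_mul two_ne_zero (cos_pos_of_mem_Ioo hs₂).ne']
    ring
  exact isOpen_Ioo.eqOn_of_deriv_eq isPreconnected_Ioo
    (fun s hs => (hseries s hs).differentiableAt.differentiableWithinAt)
    (fun s hs => (hint s hs).differentiableAt.differentiableWithinAt)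
    (fun s hs => (hseries s hs).deriv.trans (hint s hs).deriv.symm)
    zero_mem_Ioo_neg_pi_div_two (by simp [logSinIntegral_pi_div_two]) ht

lemma logSinIntegral_combination :
    4 * logSinIntegral (π / 3) + 8 * logSinIntegral (5 * π / 12) - 2 / 3 * logSinIntegral (π / 6)
      = -(8 / 3) * catalan' := by
  have h₁ := logSinIntegral_two_mul (a := π / 12) ⟨by positivity, by linarith [pi_pos]⟩
  have h₂ := logSinIntegral_two_mul (a := π / 6) ⟨by positivity, by linarith [pi_pos]⟩
  have h₃ := logSinIntegral_three_mul (a := π / 12) ⟨by positivity, by linarith [pi_pos]⟩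
  ring_nf at h₁ h₂ h₃ ⊢
  have hG := two_mul_logSinIntegral_pi_div_four
  ring_nf at hG
  linarith

lemma tsum_centralCoeff_half :
    ∑' k : ℕ, centralCoeff k * (1 / 2) ^ (2 * k + 1) / (2 * k + 1) = π / 6 := by
  have h := tsum_centralCoeff_mul_sin_pow (t := π / 6)
    ⟨by linarith [pi_pos], by linarith [pi_pos]⟩
  rwa [sin_pi_div_six] at h

lemma tsum_centralCoeff_mul_harmonicCoeff_half :
    ∑' k : ℕ, centralCoeff k * harmonicCoeff k * (1 / 2) ^ (2 * k + 1) / (2 * k + 1)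
      = 4 * π / 3 * log 2 - 8 / 3 * catalan' - 2 / 3 * oddDilog centralCoeff (1 / 2) := by
  have h := tsum_centralCoeff_mul_harmonicCoeff_mul_sin_pow (t := π / 6)
    ⟨by linarith [pi_pos], by linarith [pi_pos]⟩
  rw [sin_pi_div_six, show π / 2 - π / 6 = π / 3 by ring,
    show π / 2 - π / 6 / 2 = 5 * π / 12 by ring] at h
  linarith [logSinIntegral_combination, logSinIntegral_pi_div_six]

/-! ### The holomorphic correction term -/

/-- The holomorphic extension of `t ↦ wzKernel t 0`. -/
noncomputable def complexKernel (z : ℂ) : ℂ :=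
  2 ^ (-2 * z) * (Complex.Gamma (z + 1 / 2) / (√π * Complex.Gamma (z + 1))) ^ 3

lemma wzKernel_zero_right (t : ℝ) :
    wzKernel t 0 = 2 ^ (-2 * t) * (Gamma (t + 1 / 2) / (√π * Gamma (t + 1))) ^ 3 := by
  rw [wzKernel, add_zero, zero_add, Gamma_one_half_eq]
  ring

lemma ofReal_wzKernel_zero_right (t : ℝ) : ((wzKernel t 0 : ℝ) : ℂ) = complexKernel t := by
  rw [wzKernel_zero_right, complexKernel]
  push_cast [Complex.ofReal_cpow two_pos.le, ← Complex.Gamma_ofReal]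
  rfl

lemma complexGamma_one_half : Complex.Gamma (1 / 2) = √π := by
  rw [← Gamma_one_half_eq, ← Complex.Gamma_ofReal]
  push_cast
  rfl

lemma ofReal_sqrt_pi_ne_zero : ((√π : ℝ) : ℂ) ≠ 0 :=
  Complex.ofReal_ne_zero.2 (sqrt_ne_zero'.2 pi_pos)

lemma complexKernel_zero : complexKernel 0 = 1 := by
  simp only [complexKernel, zero_add, mul_zero, Complex.cpow_zero, complexGamma_one_half,
    Complex.Gamma_one, mul_one, div_self ofReal_sqrt_pi_ne_zero, one_pow]

lemma differentiableAt_complexKernel {z : ℂ} (hz : -1 / 2 < z.re) :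
    DifferentiableAt ℂ complexKernel z := by
  have hΓ {a : ℂ} (ha : 0 < (z + a).re) :
      DifferentiableAt ℂ (fun z => Complex.Gamma (z + a)) z := by
    refine (Complex.differentiableAt_Gamma _ fun m h => ?_).comp z (by fun_prop)
    rw [h, Complex.neg_re, Complex.natCast_re] at ha
    linarith [m.cast_nonneg (α := ℝ)]
  have h₁ : 0 < (z + 1).re := by norm_num; linarith
  have h₂ : 0 < (z + 1 / 2).re := by norm_num; linarith
  have hpow : DifferentiableAt ℂ (fun z : ℂ => (2 : ℂ) ^ (-2 * z)) z :=
    (by fun_prop : DifferentiableAt ℂ (fun z : ℂ => -2 * z) z).const_cpow (.inl two_ne_zero)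
  exact hpow.mul (((hΓ h₂).div ((hΓ h₁).const_mul _)
    (mul_ne_zero ofReal_sqrt_pi_ne_zero (Complex.Gamma_ne_zero_of_re_pos h₁))).pow 3)

lemma hasDerivAt_complexKernel_zero : HasDerivAt complexKernel (-8 * log 2 : ℝ) 0 := by
  have hπ := ofReal_sqrt_pi_ne_zero
  have hlog : Complex.log 2 = (log 2 : ℝ) := by
    rw [Complex.ofReal_log two_pos.le, Complex.ofReal_ofNat]
  have hΓ {a D : ℂ} (h : HasDerivAt Complex.Gamma D a) :
      HasDerivAt (fun z : ℂ => Complex.Gamma (z + a)) D 0 :=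
    HasDerivAt.comp_add_const 0 a (by rwa [zero_add])
  have hpow : HasDerivAt (fun z : ℂ => (2 : ℂ) ^ (-2 * z)) (-2 * log 2 : ℝ) 0 := by
    refine (((hasDerivAt_id' (0 : ℂ)).const_mul (-2)).const_cpow (.inl two_ne_zero)).congr_deriv ?_
    rw [mul_zero, Complex.cpow_zero, hlog]
    push_cast
    ring
  have hquot : HasDerivAt
      (fun z : ℂ => Complex.Gamma (z + 1 / 2) / (√π * Complex.Gamma (z + 1)))
      (-2 * log 2 : ℝ) 0 := by
    refine ((hΓ Complex.hasDerivAt_Gamma_one_half).div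
      ((hΓ Complex.hasDerivAt_Gamma_one).const_mul _) (by simpa using hπ)).congr_deriv ?_
    simp only [zero_add, complexGamma_one_half, Complex.Gamma_one, hlog]
    push_cast
    field_simp
    ring
  refine (hpow.mul (hquot.pow 3)).congr_deriv ?_
  simp only [zero_add, mul_zero, Complex.cpow_zero, complexGamma_one_half,
    Complex.Gamma_one, mul_one, div_self hπ, Pi.pow_apply]
  push_cast
  ring

/-- The holomorphic extension of the quotient `wzKernel t k / wzKernel t 0`. -/
noncomputable def kernelRatio (k : ℕ) (z : ℂ) : ℂ :=
  ∏ j ∈ Finset.range k, (2 * z + 2 * j + 1) ^ 3 / (8 * (z + j + 1) * (2 * j + 1) ^ 2)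

lemma kernelRatio_zero_left (z : ℂ) : kernelRatio 0 z = 1 := Finset.prod_range_zero _

lemma kernelRatio_succ (k : ℕ) (z : ℂ) :
    kernelRatio (k + 1) z
      = kernelRatio k z * ((2 * z + 2 * k + 1) ^ 3 / (8 * (z + k + 1) * (2 * k + 1) ^ 2)) :=
  Finset.prod_range_succ _ k

lemma ofReal_wzKernel_natCast {t : ℝ} (ht : -1 / 2 < t) (k : ℕ) :
    ((wzKernel t k : ℝ) : ℂ) = complexKernel t * kernelRatio k t := by
  induction k with
  | zero => rw [Nat.cast_zero, ofReal_wzKernel_zero_right, kernelRatio_zero_left, mul_one]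
  | succ k ih =>
    have hratio : (t + k + 1 / 2) ^ 3 / (4 * (t + k + 1) * ((k : ℝ) + 1 / 2) ^ 2)
        = (2 * t + 2 * k + 1) ^ 3 / (8 * (t + k + 1) * (2 * k + 1) ^ 2) := by
      have h : t + k + 1 ≠ 0 := by linarith [k.cast_nonneg (α := ℝ)]
      field_simp
      ring
    rw [kernelRatio_succ, ← mul_assoc, ← ih, Nat.cast_succ,
      wzKernel_add_one_right ht k.cast_nonneg, hratio]
    push_cast
    rfl

lemma add_natCast_add_one_ne_zero {z : ℂ} (hz : -1 < z.re) (j : ℕ) : z + j + 1 ≠ 0 := fun h => by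
  have hre := congrArg Complex.re h
  simp only [Complex.add_re, Complex.natCast_re, Complex.one_re, Complex.zero_re] at hre
  linarith [j.cast_nonneg (α := ℝ)]

lemma two_mul_natCast_add_one_ne_zero (j : ℕ) : (2 * j + 1 : ℂ) ≠ 0 := by
  exact_mod_cast (2 * j).succ_ne_zero

lemma norm_two_mul_natCast_add_one (j : ℕ) : ‖(2 * j + 1 : ℂ)‖ = 2 * j + 1 := by
  simpa using Complex.norm_natCast (2 * j + 1)

lemma norm_kernelRatio_factor_le {z : ℂ} (hz : ‖z‖ ≤ 1 / 4) (j : ℕ) :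
    ‖(2 * z + 2 * j + 1) ^ 3 / (8 * (z + j + 1) * (2 * j + 1) ^ 2)‖ ≤ 9 / 16 := by
  have hnum : ‖2 * z + 2 * j + 1‖ ≤ 2 * (j : ℝ) + 3 / 2 := by
    have h := norm_add_le (2 * z) (2 * j + 1)
    rw [norm_two_mul_natCast_add_one, norm_mul, Complex.norm_ofNat, ← add_assoc] at h
    linarith
  have hden : (j : ℝ) + 3 / 4 ≤ ‖z + j + 1‖ := by
    have h := norm_sub_le_norm_add ((j : ℂ) + 1) z
    have hj : ‖(j : ℂ) + 1‖ = j + 1 := by simpa using Complex.norm_natCast (j + 1)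
    rw [hj, show (j : ℂ) + 1 + z = z + j + 1 by ring] at h
    linarith
  rw [norm_div, norm_pow, norm_mul, norm_mul, norm_pow, norm_two_mul_natCast_add_one,
    Complex.norm_ofNat]
  calc ‖2 * z + 2 * j + 1‖ ^ 3 / (8 * ‖z + j + 1‖ * (2 * (j : ℝ) + 1) ^ 2)
      ≤ (2 * (j : ℝ) + 3 / 2) ^ 3 / (8 * ((j : ℝ) + 3 / 4) * (2 * (j : ℝ) + 1) ^ 2) := by gcongr
    _ = ((2 * (j : ℝ) + 3 / 2) / (2 * (2 * j + 1))) ^ 2 := by field_simp; ring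
    _ ≤ (3 / 4) ^ 2 := by
      refine pow_le_pow_left₀ (by positivity) ?_ 2
      rw [div_le_div_iff₀ (by positivity) (by positivity)]
      linarith [j.cast_nonneg (α := ℝ)]
    _ = 9 / 16 := by norm_num

lemma norm_kernelRatio_le {z : ℂ} (hz : ‖z‖ ≤ 1 / 4) (k : ℕ) :
    ‖kernelRatio k z‖ ≤ (9 / 16) ^ k := by
  rw [kernelRatio, Complex.norm_prod]
  refine (Finset.prod_le_prod (fun j _ => norm_nonneg _)
    fun j _ => norm_kernelRatio_factor_le hz j).trans_eq ?_
  rw [Finset.prod_const, Finset.card_range]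

lemma differentiableAt_kernelRatio {z : ℂ} (hz : -1 < z.re) (k : ℕ) :
    DifferentiableAt ℂ (kernelRatio k) z :=
  DifferentiableAt.fun_finsetProd fun j _ => DifferentiableAt.div (by fun_prop) (by fun_prop)
    (mul_ne_zero (mul_ne_zero (by norm_num) (add_natCast_add_one_ne_zero hz j))
      (pow_ne_zero 2 (two_mul_natCast_add_one_ne_zero j)))

lemma kernelRatio_zero_right (k : ℕ) :
    kernelRatio k 0 = (centralCoeff k / 4 ^ k : ℝ) := by
  induction k with
  | zero => simp [kernelRatio_zero_left, centralCoeff_zero]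
  | succ k ih =>
    have hsucc : centralCoeff (k + 1) = (k + 1 / 2) * centralCoeff k / (k + 1) := by
      rw [← centralCoeff_succ]
      field_simp
    have h₁ := two_mul_natCast_add_one_ne_zero k
    have h₂ := k.cast_add_one_ne_zero (R := ℂ)
    rw [kernelRatio_succ, ih, hsucc]
    push_cast
    rw [mul_zero, zero_add, zero_add, pow_succ (4 : ℂ)]
    field_simp
    ring

lemma hasDerivAt_kernelRatio_zero (k : ℕ) :
    HasDerivAt (kernelRatio k) (kernelRatio k 0 * harmonicCoeff k) 0 := by
  induction k with
  | zero =>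
    have h : kernelRatio 0 = fun _ => 1 := funext kernelRatio_zero_left
    simpa [h, harmonicCoeff] using hasDerivAt_const (0 : ℂ) (1 : ℂ)
  | succ k ih =>
    have h₁ := two_mul_natCast_add_one_ne_zero k
    have h₂ := k.cast_add_one_ne_zero (R := ℂ)
    have hnum : HasDerivAt (fun z : ℂ => (2 * z + 2 * k + 1) ^ 3)
        (6 * (2 * (k : ℂ) + 1) ^ 2) 0 := by
      refine (((((hasDerivAt_id' (0 : ℂ)).const_mul 2).add_const _).add_const 1).pow
        3).congr_deriv ?_
      push_cast
      ring
    have hden : HasDerivAt (fun z : ℂ => 8 * (z + k + 1) * (2 * k + 1) ^ 2)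
        (8 * (2 * (k : ℂ) + 1) ^ 2) 0 :=
      (((((hasDerivAt_id' (0 : ℂ)).add_const _).add_const 1).const_mul 8).mul_const
        _).congr_deriv (by ring)
    have hden₀ : 8 * (0 + k + 1) * (2 * k + 1 : ℂ) ^ 2 ≠ 0 := by
      rw [zero_add]
      exact mul_ne_zero (mul_ne_zero (by norm_num) h₂) (pow_ne_zero 2 h₁)
    have hharm : (harmonicCoeff (k + 1) : ℂ)
        = harmonicCoeff k + (6 / (2 * k + 1) - 1 / (k + 1)) := by
      rw [harmonicCoeff, Finset.sum_range_succ, ← harmonicCoeff]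
      have h : 3 / ((k : ℝ) + 1 / 2) = 6 / (2 * k + 1) := by field_simp; ring
      rw [h]
      push_cast
      rfl
    refine ((ih.mul (hnum.div hden hden₀)).congr_of_eventuallyEq
      (.of_forall fun z => kernelRatio_succ k z)).congr_deriv ?_
    rw [kernelRatio_succ, hharm]
    simp only [Pi.div_apply, mul_zero, zero_add]
    field_simp

/-- The `k`-th term of the series of holomorphic functions that represents
`-(∑' k, wzF t k) / (t ^ 2 * wzKernel t 0)`. -/
noncomputable def correctionTerm (k : ℕ) (z : ℂ) : ℂ :=
  4 * (2 * z + 6 * k + 3) / (2 * k + 1) ^ 2 * kernelRatio k z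

lemma norm_correctionTerm_le {z : ℂ} (hz : ‖z‖ ≤ 1 / 4) (k : ℕ) :
    ‖correctionTerm k z‖ ≤ 16 * (9 / 16) ^ k := by
  have hnum : ‖2 * z + 6 * k + 3‖ ≤ 6 * (k : ℝ) + 4 := by
    refine norm_add₃_le.trans ?_
    simp only [norm_mul, Complex.norm_ofNat, Complex.norm_natCast]
    linarith
  rw [correctionTerm, norm_mul, norm_div, norm_mul, norm_pow, norm_two_mul_natCast_add_one,
    Complex.norm_ofNat]
  refine mul_le_mul ?_ (norm_kernelRatio_le hz k) (norm_nonneg _) (by norm_num)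
  rw [div_le_iff₀ (by positivity)]
  nlinarith [k.cast_nonneg (α := ℝ)]

lemma summable_sixteen_mul_geometric : Summable fun k : ℕ => (16 : ℝ) * (9 / 16) ^ k :=
  (summable_geometric_of_lt_one (by norm_num) (by norm_num)).mul_left 16

lemma neg_one_fourth_lt_re {z : ℂ} (hz : z ∈ Metric.ball 0 (1 / 4)) : -(1 / 4) < z.re :=
  (abs_lt.1 ((Complex.abs_re_le_norm z).trans_lt (mem_ball_zero_iff.1 hz))).1

lemma differentiableOn_correctionTerm (k : ℕ) :
    DifferentiableOn ℂ (correctionTerm k) (Metric.ball 0 (1 / 4)) := fun z hz =>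
  ((by fun_prop : DifferentiableAt ℂ (fun z : ℂ => 4 * (2 * z + 6 * k + 3) / (2 * k + 1) ^ 2)
    z).mul (differentiableAt_kernelRatio (by linarith [neg_one_fourth_lt_re hz])
      k)).differentiableWithinAt

lemma correctionTerm_zero (k : ℕ) :
    correctionTerm k 0 = (24 * (centralCoeff k * (1 / 2) ^ (2 * k + 1) / (2 * k + 1)) : ℝ) := by
  have h := two_mul_natCast_add_one_ne_zero k
  have hcoeff : 4 * (2 * 0 + 6 * k + 3) / (2 * k + 1) ^ 2 = (12 / (2 * k + 1) : ℂ) := by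
    field_simp
    ring
  rw [correctionTerm, kernelRatio_zero_right, hcoeff, pow_succ (1 / 2 : ℝ), pow_mul]
  push_cast
  norm_num [div_pow]
  field_simp
  ring

lemma hasDerivAt_correctionTerm_zero (k : ℕ) :
    HasDerivAt (correctionTerm k)
      (24 * (centralCoeff k * harmonicCoeff k * (1 / 2) ^ (2 * k + 1) / (2 * k + 1))
        + 16 * (centralCoeff k * (1 / 2) ^ (2 * k + 1) / (2 * k + 1) ^ 2) : ℝ) 0 := by
  have h := two_mul_natCast_add_one_ne_zero k
  have hlin : HasDerivAt (fun z : ℂ => 4 * (2 * z + 6 * k + 3) / (2 * k + 1) ^ 2)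
      (8 / (2 * (k : ℂ) + 1) ^ 2) 0 :=
    ((((((hasDerivAt_id' (0 : ℂ)).const_mul 2).add_const _).add_const 3).const_mul 4).div_const
      _).congr_deriv (by ring)
  refine (hlin.mul (hasDerivAt_kernelRatio_zero k)).congr_deriv ?_
  rw [kernelRatio_zero_right, pow_succ (1 / 2 : ℝ), pow_mul]
  push_cast
  norm_num [div_pow]
  field_simp
  ring

/-- The holomorphic function `Φ` with `∑' k, wzF t k = -t ^ 2 * Φ t`. -/
noncomputable def correction (z : ℂ) : ℂ := complexKernel z * ∑' k : ℕ, correctionTerm k z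

lemma differentiableOn_tsum_correctionTerm :
    DifferentiableOn ℂ (fun z => ∑' k : ℕ, correctionTerm k z) (Metric.ball 0 (1 / 4)) :=
  Complex.differentiableOn_tsum_of_summable_norm summable_sixteen_mul_geometric
    differentiableOn_correctionTerm Metric.isOpen_ball
    fun k _ hz => norm_correctionTerm_le (mem_ball_zero_iff.1 hz).le k

lemma differentiableOn_correction : DifferentiableOn ℂ correction (Metric.ball 0 (1 / 4)) :=
  .mul (fun z hz => (differentiableAt_complexKernel
    (by linarith [neg_one_fourth_lt_re hz])).differentiableWithinAt)
    differentiableOn_tsum_correctionTerm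

lemma tsum_correctionTerm_zero : ∑' k : ℕ, correctionTerm k 0 = (4 * π : ℝ) := by
  rw [tsum_congr correctionTerm_zero, ← Complex.ofReal_tsum, tsum_mul_left,
    tsum_centralCoeff_half]
  ring_nf

lemma deriv_tsum_correctionTerm_zero :
    deriv (fun z => ∑' k : ℕ, correctionTerm k z) 0 = (32 * π * log 2 - 64 * catalan' : ℝ) := by
  have hderiv := Complex.hasSum_deriv_of_summable_norm summable_sixteen_mul_geometric
    differentiableOn_correctionTerm Metric.isOpen_ball
    (fun k _ hz => norm_correctionTerm_le (mem_ball_zero_iff.1 hz).le k)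
    (Metric.mem_ball_self (by norm_num))
  simp only [fun k => (hasDerivAt_correctionTerm_zero k).deriv] at hderiv
  have hdilog : Summable fun k : ℕ => centralCoeff k * (1 / 2) ^ (2 * k + 1) / (2 * k + 1) ^ 2 :=
    .of_norm_bounded summable_one_div_two_mul_add_one_sq fun k =>
      norm_oddDilog_term_le abs_centralCoeff_le_one (by norm_num) k
  have hharm : Summable fun k : ℕ =>
      24 * (centralCoeff k * harmonicCoeff k * (1 / 2) ^ (2 * k + 1) / (2 * k + 1)) := by
    simpa using (Complex.summable_ofReal.1 hderiv.summable).sub (hdilog.mul_left 16)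
  rw [← hderiv.tsum_eq, ← Complex.ofReal_tsum, hharm.tsum_add (hdilog.mul_left 16),
    tsum_mul_left, tsum_mul_left, tsum_centralCoeff_mul_harmonicCoeff_half, ← oddDilog]
  ring_nf

lemma correction_zero : correction 0 = (4 * π : ℝ) := by
  rw [correction, complexKernel_zero, one_mul, tsum_correctionTerm_zero]

lemma deriv_correction_zero : deriv correction 0 = (-64 * catalan' : ℝ) := by
  have hsum := (differentiableOn_tsum_correctionTerm.differentiableAt
    (Metric.ball_mem_nhds 0 (by norm_num))).hasDerivAt
  refine (hasDerivAt_complexKernel_zero.mul hsum).deriv.trans ?_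
  rw [complexKernel_zero, tsum_correctionTerm_zero, deriv_tsum_correctionTerm_zero]
  push_cast
  ring

lemma ofReal_tsum_wzF {t : ℝ} (ht : -1 / 2 < t) :
    ((∑' k : ℕ, wzF t k : ℝ) : ℂ) = -t ^ 2 * correction t := by
  rw [Complex.ofReal_tsum, correction, ← mul_assoc, ← tsum_mul_left]
  refine tsum_congr fun k => ?_
  have hterm : (2 * t + 6 * k + 3) / ((k : ℝ) + 1 / 2) ^ 2
      = 4 * (2 * t + 6 * k + 3) / (2 * k + 1) ^ 2 := by
    field_simp
    ring
  rw [wzF, mul_div_assoc, hterm, correctionTerm]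
  push_cast
  rw [ofReal_wzKernel_natCast ht]
  ring

/-! ### The expansion -/

lemma isBigO_sub_linear_of_differentiableOn {E : Type*} [NormedAddCommGroup E]
    [NormedSpace ℂ E] [CompleteSpace E] {f : ℂ → E} {s : Set ℂ} {c : ℂ} (hs : s ∈ 𝓝 c)
    (hf : DifferentiableOn ℂ f s) :
    (fun z => f z - f c - (z - c) • deriv f c) =O[𝓝 c] fun z => (z - c) ^ 2 := by
  have hslope := ((Complex.differentiableOn_dslope hs).2 hf).differentiableAt hs
  refine (((isBigO_refl (fun z : ℂ => z - c) (𝓝 c)).smul hslope.hasDerivAt.isBigO_sub).congr_left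
    fun z => ?_).congr_right fun z => (pow_two (z - c)).symm
  rw [smul_sub, sub_smul_dslope, dslope_same]

lemma tsum_wzF_isBigO :
    (fun x : ℝ => ∑' k : ℕ, wzF x k + 4 * π * x ^ 2 - 64 * catalan' * x ^ 3)
      =O[𝓝 0] fun x => x ^ 4 := by
  have hofReal : Tendsto (fun x : ℝ => (x : ℂ)) (𝓝 0) (𝓝 0) :=
    Complex.continuous_ofReal.tendsto' 0 0 Complex.ofReal_zero
  have htaylor := (isBigO_sub_linear_of_differentiableOn (Metric.ball_mem_nhds 0 (by norm_num))
    differentiableOn_correction).comp_tendsto hofReal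
  have hmul := (isBigO_refl (fun x : ℝ => -(x : ℂ) ^ 2) (𝓝 0)).mul htaylor
  rw [correction_zero, deriv_correction_zero] at hmul
  refine .of_norm_norm (hmul.norm_norm.congr' ?_ (.of_forall fun x => ?_))
  · filter_upwards [lt_mem_nhds (show (-1 / 2 : ℝ) < 0 by norm_num)] with x hx
    rw [← Complex.norm_real]
    congr 1
    simp only [Function.comp_apply, sub_zero, smul_eq_mul]
    push_cast [-Complex.ofReal_tsum, ofReal_tsum_wzF hx]
    ring
  · simp only [Function.comp_apply, sub_zero, norm_mul, norm_neg, norm_pow, Complex.norm_real]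
    ring

lemma pochG_one_half_div_pochG_one (t : ℝ) :
    pochG (1 / 2) t / pochG 1 t = Gamma (t + 1 / 2) / (√π * Gamma (t + 1)) := by
  rw [pochG, pochG, Gamma_one, Gamma_one_half_eq, div_one, div_div, add_comm, add_comm 1]

lemma wzG_zero_right (t : ℝ) :
    wzG t 0 = 2 ^ (-2 * t) * (pochG (1 / 2) t / pochG 1 t) ^ 3 * (6 * t + 1) := by
  rw [wzG, wzKernel_zero_right, pochG_one_half_div_pochG_one, mul_zero, add_zero]

/-- As `x → 0`,
`(1/4) ∑_{n≥0} 2^{-2(n+x)} ((1/2)_{n+x}/(1)_{n+x})³ (6(n+x)+1)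
 = 1/π - π x² + 16 G x³ + O(x⁴)`. -/
theorem identity1_expansion :
    (fun x : ℝ =>
      (1/4 : ℝ) * (∑' n : ℕ,
          (2 : ℝ) ^ (-(2 : ℝ) * ((n : ℝ) + x)) *
            (pochG (1/2) ((n : ℝ) + x) / pochG 1 ((n : ℝ) + x)) ^ 3 *
            (6 * ((n : ℝ) + x) + 1))
        - (1 / Real.pi - Real.pi * x ^ 2 + 16 * catalan' * x ^ 3))
      =O[nhds 0] (fun x : ℝ => x ^ 4) := by
  refine (tsum_wzF_isBigO.const_mul_left (1 / 4)).congr' ?_ .rfl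
  filter_upwards [lt_mem_nhds (show (-1 / 2 : ℝ) < 0 by norm_num)] with x hx
  simp only [← wzG_zero_right]
  rw [tsum_wzG_eq hx]
  ring
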